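/- arXiv:2001.11061 — 4 statements merged into one kernel-verified Lean document; each statement's English description precedes it below -/
import Mathlib

section
/- Let n ≥ 1 and let K : ℝⁿ × ℝⁿ → ℂ be measurable with K = ∑_{j=1}^{N} K_j, where each K_j is measurable and satisfies either M_j := (ess sup_{ξ∈ℝⁿ} ∫_{ℝⁿ} |K_j(ξ,η)|² dη)^{1/2} < ∞ or M_j := (ess sup_{η∈ℝⁿ} ∫_{ℝⁿ} |K_j(ξ,η)|² dξ)^{1/2} < ∞. Then for all f, g ∈ L²(ℝⁿ) the function h(ξ) = ∫_{ℝⁿ} K(ξ,η) f(ξ−η) g(η) dη is defined for almost every ξ (the integral converges absolutely for a.e. ξ), belongs to L²(ℝⁿ), and ‖h‖_{L²} ≤ (∑_{j=1}^{N} M_j) · ‖f‖_{L²} · ‖g‖_{L²}. -/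
open MeasureTheory ENNReal

/-!
By the triangle inequality in the mixed norm `‖F‖_{L²_ξ L¹_η}`, a single kernel `k` suffices.
Write the integrand as `a b g` with `{a, b} = {k(ξ, η), f(ξ - η)}`, where `a` is the factor bounded
in `L^∞_ξ L²_η` and `b` the one bounded in `L^∞_η L²_ξ`; the translate `f(ξ - η)` satisfies both
bounds, so it can play whichever role `k` leaves free. Cauchy–Schwarz in `η` extracts `a` and leaves
`‖b g‖_{L²_ξ L²_η}`, in which Tonelli's theorem exchanges the two norms and extracts `b`.
-/

section ENNReal

variable {α : Type*} {mα : MeasurableSpace α} {μ : Measure α}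

theorem ae_lt_top_of_eLpNorm_lt_top {p : ℝ≥0∞} (hp : p ≠ 0) {u : α → ℝ≥0∞}
    (hu : AEMeasurable u μ) (h : eLpNorm u p μ < ∞) : ∀ᵐ x ∂μ, u x < ∞ := by
  rcases eq_or_ne p ∞ with rfl | hp'
  · rw [eLpNorm_exponent_top] at h
    filter_upwards [ae_le_eLpNormEssSup (f := u)] with x hx using hx.trans_lt h
  · have hpos := ENNReal.toReal_pos hp hp'
    have hint := lintegral_rpow_enorm_lt_top_of_eLpNorm_lt_top hp hp' h
    filter_upwards [ae_lt_top' (hu.pow_const _) hint.ne] with x hx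
    exact (ENNReal.rpow_lt_top_iff_of_pos hpos).1 hx

theorem essSup_rpow (u : α → ℝ≥0∞) {r : ℝ} (hr : 0 < r) :
    essSup (fun x => u x ^ r) μ = essSup u μ ^ r :=
  (OrderIso.essSup_apply u μ (ENNReal.orderIsoRpow r hr)).symm

end ENNReal

section MixedNorm

variable {α β E 𝔸 : Type*} {mα : MeasurableSpace α} {mβ : MeasurableSpace β}
  [NormedAddCommGroup E] [NormedRing 𝔸] {μ : Measure α} {ν : Measure β} {p q r : ℝ≥0∞}

/-- The mixed Lebesgue norm `‖F‖_{L^p_x L^q_y}` of a function of `(x, y)`: the `L^q(ν)` norm is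
taken in `y` first, then the `L^p(μ)` norm in `x`. The opposite order `L^p_y L^q_x` is obtained by
applying this to `F ∘ Prod.swap`. -/
noncomputable def mixedELpNorm (F : α × β → E) (q : ℝ≥0∞) (ν : Measure β) (p : ℝ≥0∞)
    (μ : Measure α) : ℝ≥0∞ :=
  eLpNorm (fun x => eLpNorm (fun y => F (x, y)) q ν) p μ

theorem ae_eLpNorm_le_mixedELpNorm_top (F : α × β → E) (q : ℝ≥0∞) (ν : Measure β)
    (μ : Measure α) : ∀ᵐ x ∂μ, eLpNorm (fun y => F (x, y)) q ν ≤ mixedELpNorm F q ν ∞ μ := by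
  simpa only [mixedELpNorm, eLpNorm_exponent_top, enorm_eq_self] using
    ae_le_eLpNormEssSup (μ := μ) (f := fun x => eLpNorm (fun y => F (x, y)) q ν)

theorem mixedELpNorm_two_top (F : α × β → E) :
    mixedELpNorm F 2 ν ∞ μ = essSup (fun x => ∫⁻ y, ‖F (x, y)‖ₑ ^ 2 ∂ν) μ ^ (1 / 2 : ℝ) := by
  rw [mixedELpNorm, eLpNorm_exponent_top, eLpNormEssSup, ← essSup_rpow _ (by norm_num)]
  simp [eLpNorm_eq_lintegral_rpow_enorm_toReal two_ne_zero ofNat_ne_top]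

theorem aemeasurable_eLpNorm_prodMk_left [SFinite ν] {F : α × β → E}
    (hF : AEStronglyMeasurable F (μ.prod ν)) (hq : q ≠ ∞) :
    AEMeasurable (fun x => eLpNorm (fun y => F (x, y)) q ν) μ := by
  rcases eq_or_ne q 0 with rfl | hq'
  · simp
  · simp only [eLpNorm_eq_lintegral_rpow_enorm_toReal hq' hq]
    exact (hF.enorm.pow_const _).lintegral_prod_right'.pow_const _

theorem mixedELpNorm_swap [SFinite μ] [SFinite ν] {F : α × β → E}
    (hF : AEStronglyMeasurable F (μ.prod ν)) (hp : p ≠ ∞) :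
    mixedELpNorm F p ν p μ = mixedELpNorm (F ∘ Prod.swap) p μ p ν := by
  rcases eq_or_ne p 0 with rfl | hp'
  · simp [mixedELpNorm]
  · have hpos := ENNReal.toReal_pos hp' hp
    simp only [mixedELpNorm, eLpNorm_eq_lintegral_rpow_enorm_toReal hp' hp, enorm_eq_self,
      Function.comp_apply, Prod.swap_prod_mk, ← ENNReal.rpow_mul, one_div_mul_cancel hpos.ne',
      ENNReal.rpow_one]
    rw [lintegral_lintegral_swap (hF.enorm.pow_const _)]

theorem mixedELpNorm_sum_le [SFinite ν] {ι : Type*} [Fintype ι] {F : ι → α × β → E}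
    (hF : ∀ j, AEStronglyMeasurable (F j) (μ.prod ν)) (hp : 1 ≤ p) (hq : 1 ≤ q) (hq' : q ≠ ∞) :
    mixedELpNorm (∑ j, F j) q ν p μ ≤ ∑ j, mixedELpNorm (F j) q ν p μ := by
  have h_slices : ∀ᵐ x ∂μ, ∀ j, AEStronglyMeasurable (fun y => F j (x, y)) ν :=
    ae_all_iff.2 fun j => (hF j).prodMk_left
  calc mixedELpNorm (∑ j, F j) q ν p μ
      ≤ eLpNorm (∑ j, fun x => eLpNorm (fun y => F j (x, y)) q ν) p μ := by
        refine eLpNorm_mono_enorm_ae ?_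
        filter_upwards [h_slices] with x hx
        simpa only [enorm_eq_self, Finset.sum_apply, Finset.sum_fn] using
          eLpNorm_sum_le (fun j _ => hx j) hq
    _ ≤ ∑ j, mixedELpNorm (F j) q ν p μ :=
        eLpNorm_sum_le (fun j _ =>
          (aemeasurable_eLpNorm_prodMk_left (hF j) hq').aestronglyMeasurable) hp

theorem ae_integrable_of_mixedELpNorm_one_lt_top [SFinite ν] {F : α × β → E}
    (hF : AEStronglyMeasurable F (μ.prod ν)) (hp : p ≠ 0) (h : mixedELpNorm F 1 ν p μ < ∞) :
    ∀ᵐ x ∂μ, Integrable (fun y => F (x, y)) ν := by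
  have h_lt_top :=
    ae_lt_top_of_eLpNorm_lt_top hp (aemeasurable_eLpNorm_prodMk_left hF one_ne_top) h
  filter_upwards [hF.prodMk_left, h_lt_top] with x hFx hx
  exact memLp_one_iff_integrable.1 ⟨hFx, hx⟩

theorem eLpNorm_integral_le_mixedELpNorm_one [NormedSpace ℝ E] (F : α × β → E) :
    eLpNorm (fun x => ∫ y, F (x, y) ∂ν) p μ ≤ mixedELpNorm F 1 ν p μ := by
  refine eLpNorm_mono_enorm fun x => ?_
  rw [enorm_eq_self, eLpNorm_one_eq_lintegral_enorm]
  exact enorm_integral_le_lintegral_enorm _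

theorem eLpNorm_mul_le_mul_eLpNorm [HolderTriple p q r] {u v : α → 𝔸}
    (hu : AEStronglyMeasurable u μ) (hv : AEStronglyMeasurable v μ) :
    eLpNorm (fun x => u x * v x) r μ ≤ eLpNorm u p μ * eLpNorm v q μ := by
  simpa only [coe_one, one_mul] using eLpNorm_le_eLpNorm_mul_eLpNorm_of_nnnorm hu hv (· * ·) 1
    (ae_of_all _ fun x => by simpa only [one_mul] using nnnorm_mul_le (u x) (v x))

theorem mixedELpNorm_mul_le [SFinite ν] {s : ℝ≥0∞} [HolderTriple q s r] (hs : s ≠ ∞)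
    {a c : α × β → 𝔸} (ha : AEStronglyMeasurable a (μ.prod ν))
    (hc : AEStronglyMeasurable c (μ.prod ν)) :
    mixedELpNorm (fun z => a z * c z) r ν p μ
      ≤ mixedELpNorm a q ν ∞ μ * mixedELpNorm c s ν p μ := by
  refine eLpNorm_le_mul_eLpNorm_of_ae_le_mul'' p
    (aemeasurable_eLpNorm_prodMk_left hc hs).aestronglyMeasurable ?_
  filter_upwards [ae_eLpNorm_le_mixedELpNorm_top a q ν μ, ha.prodMk_left, hc.prodMk_left]
    with x hx hax hcx
  calc ‖eLpNorm (fun y => a (x, y) * c (x, y)) r ν‖ₑ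
      ≤ eLpNorm (fun y => a (x, y)) q ν * eLpNorm (fun y => c (x, y)) s ν :=
        eLpNorm_mul_le_mul_eLpNorm hax hcx
    _ ≤ mixedELpNorm a q ν ∞ μ * ‖eLpNorm (fun y => c (x, y)) s ν‖ₑ := by
        rw [enorm_eq_self]
        gcongr

theorem mixedELpNorm_mul_comp_snd_le [SFinite μ] [SFinite ν] (hp : p ≠ ∞) {b : α × β → 𝔸}
    {g : β → 𝔸} (hb : AEStronglyMeasurable b (μ.prod ν)) (hg : AEStronglyMeasurable g ν) :
    mixedELpNorm (fun z => b z * g z.2) p ν p μ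
      ≤ mixedELpNorm (b ∘ Prod.swap) p μ ∞ ν * eLpNorm g p ν := by
  have hbg : AEStronglyMeasurable (fun z => b z * g z.2) (μ.prod ν) := hb.mul hg.comp_snd
  rw [mixedELpNorm_swap hbg hp]
  refine eLpNorm_le_mul_eLpNorm_of_ae_le_mul'' p hg ?_
  filter_upwards [ae_eLpNorm_le_mixedELpNorm_top (b ∘ Prod.swap) p μ ν, hb.prod_swap.prodMk_left]
    with y hy hby
  calc ‖eLpNorm (fun x => b (x, y) * g y) p μ‖ₑ
      ≤ eLpNorm (fun x => b (x, y)) p μ * eLpNorm (fun _ => g y) ∞ μ :=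
        eLpNorm_mul_le_mul_eLpNorm hby aestronglyMeasurable_const
    _ ≤ mixedELpNorm (b ∘ Prod.swap) p μ ∞ ν * ‖g y‖ₑ := by
        gcongr
        · exact hy
        · exact eLpNormEssSup_le_of_ae_enorm_bound (ae_of_all _ fun _ => le_rfl)

theorem mixedELpNorm_one_mul_mul_comp_snd_le [SFinite μ] [SFinite ν] [HolderConjugate q p]
    (hp : p ≠ ∞) {a b : α × β → 𝔸} {g : β → 𝔸} (ha : AEStronglyMeasurable a (μ.prod ν))
    (hb : AEStronglyMeasurable b (μ.prod ν)) (hg : AEStronglyMeasurable g ν) :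
    mixedELpNorm (fun z => a z * b z * g z.2) 1 ν p μ
      ≤ mixedELpNorm a q ν ∞ μ * mixedELpNorm (b ∘ Prod.swap) p μ ∞ ν * eLpNorm g p ν := by
  simp only [mul_assoc]
  refine (mixedELpNorm_mul_le (q := q) hp ha (hb.mul hg.comp_snd)).trans ?_
  gcongr
  exact mixedELpNorm_mul_comp_snd_le hp hb hg

end MixedNorm

section Translation

variable {G E : Type*} [AddGroup G] {mG : MeasurableSpace G} [MeasurableAdd G] [MeasurableNeg G]
  {μ : Measure G} [μ.IsAddLeftInvariant] [μ.IsNegInvariant] [NormedAddCommGroup E] {p : ℝ≥0∞}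

theorem measurePreserving_sub_right_of_isNegInvariant (y : G) :
    MeasurePreserving (fun x => x - y) μ μ := by
  simpa only [Function.comp_def, neg_sub] using
    (Measure.measurePreserving_neg μ).comp (Measure.measurePreserving_sub_left μ y)

theorem mixedELpNorm_comp_sub_le {f : G → E} (hf : AEStronglyMeasurable f μ) :
    mixedELpNorm (fun z : G × G => f (z.1 - z.2)) p μ ∞ μ ≤ eLpNorm f p μ :=
  eLpNormEssSup_le_of_ae_enorm_bound <| ae_of_all _ fun x =>
    (eLpNorm_comp_measurePreserving hf (Measure.measurePreserving_sub_left μ x)).le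

theorem mixedELpNorm_comp_sub_swap_le {f : G → E} (hf : AEStronglyMeasurable f μ) :
    mixedELpNorm ((fun z : G × G => f (z.1 - z.2)) ∘ Prod.swap) p μ ∞ μ ≤ eLpNorm f p μ :=
  eLpNormEssSup_le_of_ae_enorm_bound <| ae_of_all _ fun y =>
    (eLpNorm_comp_measurePreserving hf (measurePreserving_sub_right_of_isNegInvariant y)).le

end Translation

section Kernel

variable {G E 𝔸 : Type*} [AddGroup G] {mG : MeasurableSpace G} [MeasurableAdd₂ G]
  [MeasurableNeg G] {μ : Measure G} [SFinite μ] [μ.IsAddLeftInvariant] [NormedAddCommGroup E]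
  [NormedCommRing 𝔸] {p q : ℝ≥0∞}

theorem aestronglyMeasurable_comp_sub {f : G → E} (hf : AEStronglyMeasurable f μ) :
    AEStronglyMeasurable (fun z : G × G => f (z.1 - z.2)) (μ.prod μ) :=
  hf.comp_quasiMeasurePreserving (quasiMeasurePreserving_sub μ μ)

variable [μ.IsNegInvariant]

theorem mixedELpNorm_kernel_mul_comp_sub_mul_le [HolderConjugate q p] (hp : p ≠ ∞)
    {k : G × G → 𝔸} {f g : G → 𝔸} (hk : AEStronglyMeasurable k (μ.prod μ))
    (hf : AEStronglyMeasurable f μ) (hg : AEStronglyMeasurable g μ) :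
    mixedELpNorm (fun z => k z * f (z.1 - z.2) * g z.2) 1 μ p μ
      ≤ mixedELpNorm k q μ ∞ μ * eLpNorm f p μ * eLpNorm g p μ := by
  refine (mixedELpNorm_one_mul_mul_comp_snd_le (q := q) hp hk
    (aestronglyMeasurable_comp_sub hf) hg).trans ?_
  gcongr
  exact mixedELpNorm_comp_sub_swap_le hf

theorem mixedELpNorm_kernel_mul_comp_sub_mul_le_swap [HolderConjugate q p] (hp : p ≠ ∞)
    {k : G × G → 𝔸} {f g : G → 𝔸} (hk : AEStronglyMeasurable k (μ.prod μ))
    (hf : AEStronglyMeasurable f μ) (hg : AEStronglyMeasurable g μ) :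
    mixedELpNorm (fun z => k z * f (z.1 - z.2) * g z.2) 1 μ p μ
      ≤ mixedELpNorm (k ∘ Prod.swap) p μ ∞ μ * eLpNorm f q μ * eLpNorm g p μ := by
  simp only [mul_comm (k _)]
  refine (mixedELpNorm_one_mul_mul_comp_snd_le (q := q) hp
    (aestronglyMeasurable_comp_sub hf) hk hg).trans ?_
  rw [mul_comm (mixedELpNorm (k ∘ Prod.swap) p μ ∞ μ)]
  gcongr
  exact mixedELpNorm_comp_sub_le hf

theorem mixedELpNorm_sum_kernel_mul_comp_sub_mul_le {ι : Type*} [Fintype ι]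
    {K : ι → G × G → 𝔸} (hK : ∀ j, AEStronglyMeasurable (K j) (μ.prod μ)) {M : ι → ℝ≥0∞}
    (hM : ∀ j, mixedELpNorm (K j) 2 μ ∞ μ ≤ M j ∨
      mixedELpNorm (K j ∘ Prod.swap) 2 μ ∞ μ ≤ M j)
    {f g : G → 𝔸} (hf : AEStronglyMeasurable f μ) (hg : AEStronglyMeasurable g μ) :
    mixedELpNorm (fun z => (∑ j, K j z) * f (z.1 - z.2) * g z.2) 1 μ 2 μ
      ≤ (∑ j, M j) * eLpNorm f 2 μ * eLpNorm g 2 μ := by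
  have h_single (j) : mixedELpNorm (fun z => K j z * f (z.1 - z.2) * g z.2) 1 μ 2 μ
      ≤ M j * eLpNorm f 2 μ * eLpNorm g 2 μ := by
    rcases hM j with h | h
    · grw [← h]
      exact mixedELpNorm_kernel_mul_comp_sub_mul_le ofNat_ne_top (hK j) hf hg
    · grw [← h]
      exact mixedELpNorm_kernel_mul_comp_sub_mul_le_swap ofNat_ne_top (hK j) hf hg
  have h_sum := mixedELpNorm_sum_le (p := 2) (q := 1)
    (fun j => ((hK j).mul (aestronglyMeasurable_comp_sub hf)).mul hg.comp_snd)
    one_le_two le_rfl one_ne_top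
  simp only [Finset.sum_mul]
  refine le_trans (le_of_eq ?_) (h_sum.trans (Finset.sum_le_sum fun j _ => h_single j))
  congr 1
  ext z
  simp

theorem stmt_0_general {𝕜 : Type*} [RCLike 𝕜] {ι : Type*} [Fintype ι] {K : ι → G × G → 𝕜}
    (hK : ∀ j, AEStronglyMeasurable (K j) (μ.prod μ)) {M : ι → ℝ≥0∞} (hM_lt_top : ∀ j, M j < ∞)
    (hM : ∀ j, mixedELpNorm (K j) 2 μ ∞ μ ≤ M j ∨
      mixedELpNorm (K j ∘ Prod.swap) 2 μ ∞ μ ≤ M j)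
    {f g : G → 𝕜} (hf : MemLp f 2 μ) (hg : MemLp g 2 μ) :
    (∀ᵐ ξ ∂μ, Integrable (fun η => (∑ j, K j (ξ, η)) * f (ξ - η) * g η) μ) ∧
    MemLp (fun ξ => ∫ η, (∑ j, K j (ξ, η)) * f (ξ - η) * g η ∂μ) 2 μ ∧
    eLpNorm (fun ξ => ∫ η, (∑ j, K j (ξ, η)) * f (ξ - η) * g η ∂μ) 2 μ
      ≤ (∑ j, M j) * eLpNorm f 2 μ * eLpNorm g 2 μ := by
  let F : G × G → 𝕜 := fun z => (∑ j, K j z) * f (z.1 - z.2) * g z.2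
  have hF_meas : AEStronglyMeasurable F (μ.prod μ) :=
    ((Finset.aestronglyMeasurable_fun_sum _ fun j _ => hK j).mul
      (aestronglyMeasurable_comp_sub hf.1)).mul hg.1.comp_snd
  have hF_le : mixedELpNorm F 1 μ 2 μ ≤ (∑ j, M j) * eLpNorm f 2 μ * eLpNorm g 2 μ :=
    mixedELpNorm_sum_kernel_mul_comp_sub_mul_le hK hM hf.1 hg.1
  have hF_lt_top : mixedELpNorm F 1 μ 2 μ < ∞ := hF_le.trans_lt <|
    mul_lt_top (mul_lt_top (sum_lt_top.2 fun j _ => hM_lt_top j) hf.2) hg.2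
  have h_norm := eLpNorm_integral_le_mixedELpNorm_one (ν := μ) (p := 2) (μ := μ) F
  exact ⟨ae_integrable_of_mixedELpNorm_one_lt_top hF_meas two_ne_zero hF_lt_top,
    ⟨hF_meas.integral_prod_right', h_norm.trans_lt hF_lt_top⟩, h_norm.trans hF_le⟩

end Kernel

/-- **Rauch–Reed bilinear kernel lemma.**  Let `K = ∑ j, K j` with each `K j`
measurable on `ℝⁿ × ℝⁿ`, and suppose each `K j` has a finite "Schur constant"
`M j`, equal to the square root of either the essential supremum over `ξ` of
`∫ |K j (ξ,η)|² dη`, or the essential supremum over `η` of `∫ |K j (ξ,η)|² dξ`.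
Then for `f, g ∈ L²(ℝⁿ)`, the integral `h ξ = ∫ K(ξ,η) f(ξ-η) g(η) dη`
converges absolutely for a.e. `ξ`, defines a function in `L²(ℝⁿ)`, and
`‖h‖_{L²} ≤ (∑ j, M j) ‖f‖_{L²} ‖g‖_{L²}`. -/
theorem stmt_0 (n : ℕ) (hn : 1 ≤ n) (N : ℕ)
    (K : Fin N → ((Fin n → ℝ) × (Fin n → ℝ)) → ℂ)
    (hK : ∀ j, Measurable (K j))
    (M : Fin N → ℝ≥0∞)
    (hMfin : ∀ j, M j < ⊤)
    (hM : ∀ j,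
      M j = (essSup (fun ξ : Fin n → ℝ =>
          ∫⁻ η, ((‖K j (ξ, η)‖₊ : ℝ≥0∞)) ^ 2 ∂volume) volume) ^ (1/2 : ℝ) ∨
      M j = (essSup (fun η : Fin n → ℝ =>
          ∫⁻ ξ, ((‖K j (ξ, η)‖₊ : ℝ≥0∞)) ^ 2 ∂volume) volume) ^ (1/2 : ℝ))
    (f g : (Fin n → ℝ) → ℂ)
    (hf : MemLp f 2 volume) (hg : MemLp g 2 volume) :
    (∀ᵐ ξ : Fin n → ℝ, Integrable (fun η => (∑ j, K j (ξ, η)) * f (ξ - η) * g η) volume) ∧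
    MemLp (fun ξ => ∫ η, (∑ j, K j (ξ, η)) * f (ξ - η) * g η ∂volume) 2 volume ∧
    eLpNorm (fun ξ => ∫ η, (∑ j, K j (ξ, η)) * f (ξ - η) * g η ∂volume) 2 volume
      ≤ (∑ j, M j) * eLpNorm f 2 volume * eLpNorm g 2 volume := by
  refine stmt_0_general (fun j => (hK j).aestronglyMeasurable) hMfin (fun j => ?_) hf hg
  exact (hM j).imp (fun h => (mixedELpNorm_two_top _).trans_le h.ge)
    (fun h => (mixedELpNorm_two_top _).trans_le h.ge)
end

section
/- Let d ≥ 0, n = 3+d, and let k₁, k₂, k₃ be real numbers with k_j > n/6 for j = 1,2,3. Then there exists δ₀ > 0 such that for every δ with 0 ≤ δ ≤ δ₀ one has ∫_{ℝⁿ} W_{k₁,k₂,k₃,δ}(η)^{−2} dη = ∫_{ℝⁿ} (1+η₁²+|η''|²)^{−k₁} (1+η₂²+|η''|²)^{−k₂} (1+η₃²+|η''|²)^{−k₃} (1+|η|²)^{δ} dη < ∞. -/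
open MeasureTheory

noncomputable section

/-- Frequency space `ℝⁿ` with `n = 3 + d`, written as `η = (η₁, η₂, η₃, η'')`. -/
abbrev Sp (d : ℕ) : Type := ℝ × ℝ × ℝ × EuclideanSpace ℝ (Fin d)

/-- The anisotropic weight
`W_{k₁,k₂,k₃,δ}(η) = ⟨(η₁,η'')⟩^{k₁} ⟨(η₂,η'')⟩^{k₂} ⟨(η₃,η'')⟩^{k₃} ⟨η⟩^{-δ}`,
where `⟨ζ⟩ = (1+|ζ|²)^{1/2}`. -/
def W (d : ℕ) (k₁ k₂ k₃ δ : ℝ) (η : Sp d) : ℝ :=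
  (1 + η.1 ^ 2 + ‖η.2.2.2‖ ^ 2) ^ (k₁ / 2) *
  (1 + η.2.1 ^ 2 + ‖η.2.2.2‖ ^ 2) ^ (k₂ / 2) *
  (1 + η.2.2.1 ^ 2 + ‖η.2.2.2‖ ^ 2) ^ (k₃ / 2) *
  (1 + η.1 ^ 2 + η.2.1 ^ 2 + η.2.2.1 ^ 2 + ‖η.2.2.2‖ ^ 2) ^ (-δ / 2)

/-!
For `0 ≤ p ≤ a` a bracket splits as `⟨(x, y)⟩^(-2a) ≤ ⟨x⟩^(-2p) ⟨y⟩^(-2(a - p))`. Each of the three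
brackets needs only slightly more than `p = 1/2` to be integrable in its own variable `η_j`; what is
left of the three exponents adds up in the shared variable `η''`, where `k₁ + k₂ + k₃ > n / 2`
suffices. All these inequalities are strict, so they leave room for a power `⟨η⟩^(2δ)`, which is at
most the product of the three brackets to the power `2δ`.
-/

theorem rpow_neg_one_add_add_le {u v p a : ℝ} (hu : 0 ≤ u) (hv : 0 ≤ v) (hp : 0 ≤ p)
    (hpa : p ≤ a) :
    (1 + u + v) ^ (-a) ≤ (1 + u) ^ (-p) * (1 + v) ^ (-(a - p)) :=
  calc (1 + u + v) ^ (-a) = (1 + u + v) ^ (-p) * (1 + u + v) ^ (-(a - p)) := by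
        rw [← Real.rpow_add (by positivity)]
        ring_nf
    _ ≤ (1 + u) ^ (-p) * (1 + v) ^ (-(a - p)) :=
        mul_le_mul
          (Real.rpow_le_rpow_of_nonpos (by positivity) (by linarith) (by linarith))
          (Real.rpow_le_rpow_of_nonpos (by positivity) (by linarith) (by linarith))
          (by positivity) (by positivity)

section Integrability

open Module

variable {F E : Type*}
  [NormedAddCommGroup F] [NormedSpace ℝ F] [FiniteDimensional ℝ F] [MeasurableSpace F]
  [BorelSpace F] [NormedAddCommGroup E] [NormedSpace ℝ E] [FiniteDimensional ℝ E]
  [MeasurableSpace E] [BorelSpace E]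

theorem integrable_one_add_norm_sq_rpow_neg (μ : Measure E) [μ.IsAddHaarMeasure] {p : ℝ}
    (hp : (finrank ℝ E : ℝ) < 2 * p) :
    Integrable (fun x : E => (1 + ‖x‖ ^ 2) ^ (-p)) μ := by
  simpa [neg_div] using integrable_rpow_neg_one_add_norm_sq (μ := μ) hp

theorem integrable_prod_one_add_norm_sq_add_norm_sq_rpow_neg (μ : Measure F)
    [μ.IsAddHaarMeasure] (ν : Measure E) [ν.IsAddHaarMeasure] {a₁ a₂ a₃ : ℝ}
    (h₁ : (finrank ℝ F : ℝ) < 2 * a₁) (h₂ : (finrank ℝ F : ℝ) < 2 * a₂)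
    (h₃ : (finrank ℝ F : ℝ) < 2 * a₃)
    (hsum : (3 * finrank ℝ F + finrank ℝ E : ℝ) < 2 * (a₁ + a₂ + a₃)) :
    Integrable (fun z : F × F × F × E =>
      (1 + ‖z.1‖ ^ 2 + ‖z.2.2.2‖ ^ 2) ^ (-a₁) * (1 + ‖z.2.1‖ ^ 2 + ‖z.2.2.2‖ ^ 2) ^ (-a₂) *
        (1 + ‖z.2.2.1‖ ^ 2 + ‖z.2.2.2‖ ^ 2) ^ (-a₃))
      (μ.prod (μ.prod (μ.prod ν))) := by
  obtain ⟨p, hFp, hp⟩ : ∃ p, (finrank ℝ F : ℝ) / 2 < p ∧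
      p < min (min a₁ a₂) (min a₃ ((2 * (a₁ + a₂ + a₃) - finrank ℝ E) / 6)) := by
    apply exists_between
    simp only [lt_min_iff]
    refine ⟨⟨?_, ?_⟩, ?_, ?_⟩ <;> linarith
  simp only [lt_min_iff] at hp
  obtain ⟨⟨hp₁, hp₂⟩, hp₃, hpsum⟩ := hp
  have hp₀ : 0 ≤ p := le_trans (by positivity) hFp.le
  have hF : Integrable (fun x : F => (1 + ‖x‖ ^ 2) ^ (-p)) μ :=
    integrable_one_add_norm_sq_rpow_neg μ (by linarith)
  have hE : Integrable
      (fun y : E => (1 + ‖y‖ ^ 2) ^ (-((a₁ - p) + (a₂ - p) + (a₃ - p)))) ν :=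
    integrable_one_add_norm_sq_rpow_neg ν (by linarith)
  refine (hF.mul_prod (hF.mul_prod (hF.mul_prod hE))).mono'
    (by fun_prop) (ae_of_all _ fun ⟨x₁, x₂, x₃, y⟩ => ?_)
  have split (x : F) {a : ℝ} (hpa : p < a) : (1 + ‖x‖ ^ 2 + ‖y‖ ^ 2) ^ (-a) ≤
      (1 + ‖x‖ ^ 2) ^ (-p) * (1 + ‖y‖ ^ 2) ^ (-(a - p)) :=
    rpow_neg_one_add_add_le (sq_nonneg _) (sq_nonneg _) hp₀ hpa.le
  have hy : 0 < 1 + ‖y‖ ^ 2 := by positivity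
  rw [Real.norm_of_nonneg (by positivity), neg_add, neg_add, Real.rpow_add hy, Real.rpow_add hy]
  refine (mul_le_mul (mul_le_mul (split x₁ hp₁) (split x₂ hp₂) (by positivity) (by positivity))
    (split x₃ hp₃) (by positivity) (by positivity)).trans_eq ?_
  ring

end Integrability

theorem W_rpow_neg_two (d : ℕ) (k₁ k₂ k₃ δ : ℝ) (η : Sp d) :
    W d k₁ k₂ k₃ δ η ^ (-2 : ℝ) =
      (1 + η.1 ^ 2 + ‖η.2.2.2‖ ^ 2) ^ (-k₁) * (1 + η.2.1 ^ 2 + ‖η.2.2.2‖ ^ 2) ^ (-k₂) *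
        (1 + η.2.2.1 ^ 2 + ‖η.2.2.2‖ ^ 2) ^ (-k₃) *
        (1 + η.1 ^ 2 + η.2.1 ^ 2 + η.2.2.1 ^ 2 + ‖η.2.2.2‖ ^ 2) ^ δ := by
  have half_mul (k : ℝ) : k / 2 * -2 = -k := by ring
  unfold W
  iterate 3 rw [Real.mul_rpow (by positivity) (by positivity)]
  iterate 4 rw [← Real.rpow_mul (by positivity), half_mul]
  rw [neg_neg]

theorem one_add_add_add_add_le_mul {a b c r : ℝ} (ha : 0 ≤ a) (hb : 0 ≤ b) (hc : 0 ≤ c)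
    (hr : 0 ≤ r) : 1 + a + b + c + r ≤ (1 + a + r) * (1 + b + r) * (1 + c + r) :=
  calc 1 + a + b + c + r ≤ (1 + a + r) * (1 + b) * (1 + c) := by
        have : 0 ≤ (a + r) * b + (a + r) * c + b * c + (a + r) * b * c := by positivity
        linarith
    _ ≤ (1 + a + r) * (1 + b + r) * (1 + c + r) := by gcongr (1 + a + r) * ?_ * ?_ <;> linarith

theorem W_rpow_neg_two_le (d : ℕ) (k₁ k₂ k₃ : ℝ) {δ ε : ℝ} (hε : 0 ≤ ε) (hδε : δ ≤ ε)
    (η : Sp d) :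
    W d k₁ k₂ k₃ δ η ^ (-2 : ℝ) ≤
      (1 + η.1 ^ 2 + ‖η.2.2.2‖ ^ 2) ^ (-(k₁ - ε)) *
        (1 + η.2.1 ^ 2 + ‖η.2.2.2‖ ^ 2) ^ (-(k₂ - ε)) *
        (1 + η.2.2.1 ^ 2 + ‖η.2.2.2‖ ^ 2) ^ (-(k₃ - ε)) := by
  rw [W_rpow_neg_two]
  have ha := sq_nonneg η.1
  have hb := sq_nonneg η.2.1
  have hc := sq_nonneg η.2.2.1
  have hr := sq_nonneg ‖η.2.2.2‖
  generalize η.1 ^ 2 = a, η.2.1 ^ 2 = b, η.2.2.1 ^ 2 = c, ‖η.2.2.2‖ ^ 2 = r at *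
  have hA : 0 < 1 + a + r := by positivity
  have hB : 0 < 1 + b + r := by positivity
  have hC : 0 < 1 + c + r := by positivity
  have full_le : (1 + a + b + c + r) ^ δ ≤ (1 + a + r) ^ ε * (1 + b + r) ^ ε * (1 + c + r) ^ ε :=
    calc (1 + a + b + c + r) ^ δ ≤ (1 + a + b + c + r) ^ ε :=
          Real.rpow_le_rpow_of_exponent_le (by linarith) hδε
      _ ≤ ((1 + a + r) * (1 + b + r) * (1 + c + r)) ^ ε :=
          Real.rpow_le_rpow (by positivity) (one_add_add_add_add_le_mul ha hb hc hr) hε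
      _ = _ := by rw [Real.mul_rpow (by positivity) hC.le, Real.mul_rpow hA.le hB.le]
  refine (mul_le_mul_of_nonneg_left full_le (by positivity)).trans_eq ?_
  simp only [neg_sub', sub_neg_eq_add, Real.rpow_add hA, Real.rpow_add hB, Real.rpow_add hC]
  ring

theorem integrable_W_rpow_neg_two (d : ℕ) {k₁ k₂ k₃ δ ε : ℝ} (hε : 0 ≤ ε) (hδε : δ ≤ ε)
    (h₁ : 1 / 2 < k₁ - ε) (h₂ : 1 / 2 < k₂ - ε) (h₃ : 1 / 2 < k₃ - ε)
    (hsum : ((3 : ℝ) + d) / 2 < (k₁ - ε) + (k₂ - ε) + (k₃ - ε)) :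
    Integrable (fun η : Sp d => W d k₁ k₂ k₃ δ η ^ (-2 : ℝ)) volume := by
  have hdimF : (Module.finrank ℝ ℝ : ℝ) = 1 := by simp
  have hdimE : (Module.finrank ℝ (EuclideanSpace ℝ (Fin d)) : ℝ) = d := by simp
  have hdom := integrable_prod_one_add_norm_sq_add_norm_sq_rpow_neg (F := ℝ)
    (E := EuclideanSpace ℝ (Fin d)) volume volume (a₁ := k₁ - ε) (a₂ := k₂ - ε) (a₃ := k₃ - ε)
    (by linarith [hdimF]) (by linarith [hdimF]) (by linarith [hdimF])
    (by linarith [hdimF, hdimE])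
  simp only [Real.norm_eq_abs, sq_abs] at hdom
  have hmeas : Measurable fun η : Sp d => W d k₁ k₂ k₃ δ η ^ (-2 : ℝ) := by
    unfold W
    fun_prop
  refine hdom.mono' hmeas.aestronglyMeasurable (ae_of_all _ fun η => ?_)
  rw [Real.norm_of_nonneg (by rw [W_rpow_neg_two]; positivity)]
  exact W_rpow_neg_two_le d k₁ k₂ k₃ hε hδε η

theorem stmt_1_general (d : ℕ) (k₁ k₂ k₃ : ℝ) (h₁ : 1 / 2 < k₁) (h₂ : 1 / 2 < k₂)
    (h₃ : 1 / 2 < k₃) (hsum : ((3 : ℝ) + d) / 2 < k₁ + k₂ + k₃) :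
    ∃ δ₀ > (0 : ℝ), ∀ δ ≤ δ₀,
      Integrable (fun η : Sp d => (W d k₁ k₂ k₃ δ η) ^ (-2 : ℝ)) volume := by
  obtain ⟨δ₀, hδ₀, hlt⟩ : ∃ δ₀, 0 < δ₀ ∧ δ₀ < min (min (k₁ - 1 / 2) (k₂ - 1 / 2))
      (min (k₃ - 1 / 2) ((k₁ + k₂ + k₃ - (3 + d) / 2) / 3)) := by
    apply exists_between
    simp only [lt_min_iff]
    refine ⟨⟨?_, ?_⟩, ?_, ?_⟩ <;> linarith
  simp only [lt_min_iff] at hlt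
  obtain ⟨⟨hlt₁, hlt₂⟩, hlt₃, hltsum⟩ := hlt
  exact ⟨δ₀, hδ₀, fun δ hδ => integrable_W_rpow_neg_two d hδ₀.le hδ
    (by linarith) (by linarith) (by linarith) (by linarith)⟩

/-- **Key integrability estimate for the anisotropic weight.**  If `k_j > n/6`
(`n = 3 + d`) for `j = 1,2,3`, then there is `δ₀ > 0` such that for every
`0 ≤ δ ≤ δ₀` one has `∫_{ℝⁿ} W_{k₁,k₂,k₃,δ}(η)^{-2} dη < ∞`. -/
theorem stmt_1 (d : ℕ) (k₁ k₂ k₃ : ℝ)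
    (h₁ : ((3 : ℝ) + d) / 6 < k₁) (h₂ : ((3 : ℝ) + d) / 6 < k₂)
    (h₃ : ((3 : ℝ) + d) / 6 < k₃) :
    ∃ δ₀ > (0 : ℝ), ∀ δ : ℝ, 0 ≤ δ → δ ≤ δ₀ →
      Integrable (fun η : Sp d => (W d k₁ k₂ k₃ δ η) ^ (-2 : ℝ)) volume := by
  have : (0 : ℝ) ≤ d := d.cast_nonneg
  obtain ⟨δ₀, hδ₀, hint⟩ := stmt_1_general d k₁ k₂ k₃
    (by linarith) (by linarith) (by linarith) (by linarith)
  exact ⟨δ₀, hδ₀, fun δ _ hδ => hint δ hδ⟩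
end
end

section
/- Let m < −5/2, let α₁, α₂, α₃ ∈ S^m(ℝ), and set α(η) = α₁(η₁)α₂(η₂)α₃(η₃) for η = (η₁,η₂,η₃) ∈ ℝ³. Let b : ℝ³ → ℂ be measurable and suppose that for every δ > 0 the function η ↦ ⟨η₁⟩^{−m−1/2}⟨η₂⟩^{−m−1/2}⟨η₃⟩^{−m−1/2}⟨η⟩^{1−δ} b(η) belongs to L²(ℝ³). Then b ∈ L¹(ℝ³), the convolution (α⋆b)(η) = ∫_{ℝ³} α(η−ζ) b(ζ) dζ converges absolutely for every η, and the error E(η) := (α⋆b)(η) − α(η)·∫_{ℝ³} b(ζ) dζ satisfies: for all 0 < μ₀ < μ₁ and every r > 0 with r + 2/(−m−1/2) < 1, ∫_{Υ_{μ₀,μ₁}} ⟨η⟩^{−6m−3+r} |E(η)|² dη < ∞, where Υ_{μ₀,μ₁} is the union over i ∈ {1,2,3} of the sets {η ∈ ℝ³ : η_i ≠ 0 and μ₀ < |η_j/η_i| < μ₁ for both indices j ≠ i}. -/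
open MeasureTheory

noncomputable section

/-- The symbol class `S^m(ℝ)`: `a` is smooth and `|a^{(k)}(s)| ≤ C_k (1+|s|)^{m-k}`. -/
def IsSymbol (m : ℝ) (a : ℝ → ℂ) : Prop :=
  ContDiff ℝ (⊤ : ℕ∞) a ∧ ∀ k : ℕ, ∃ C : ℝ, ∀ s : ℝ,
    ‖iteratedDeriv k a s‖ ≤ C * (1 + |s|) ^ (m - k)

/-- The bracket `⟨s⟩ = (1+s²)^{1/2}` for `s ∈ ℝ`. -/
def br (s : ℝ) : ℝ := Real.sqrt (1 + s ^ 2)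

/-- The bracket `⟨η⟩ = (1+|η|²)^{1/2}` for `η ∈ ℝ³`. -/
def br3 (η : ℝ × ℝ × ℝ) : ℝ := Real.sqrt (1 + η.1 ^ 2 + η.2.1 ^ 2 + η.2.2 ^ 2)

/-- The elliptic conic region `Υ_{μ₀,μ₁}`: the union over `i ∈ {1,2,3}` of the
sets where `η_i ≠ 0` and `μ₀ < |η_j/η_i| < μ₁` for both indices `j ≠ i`. -/
def Upsilon (μ₀ μ₁ : ℝ) : Set (ℝ × ℝ × ℝ) :=
  {η | (η.1 ≠ 0 ∧ μ₀ < |η.2.1 / η.1| ∧ |η.2.1 / η.1| < μ₁ ∧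
          μ₀ < |η.2.2 / η.1| ∧ |η.2.2 / η.1| < μ₁) ∨
       (η.2.1 ≠ 0 ∧ μ₀ < |η.1 / η.2.1| ∧ |η.1 / η.2.1| < μ₁ ∧
          μ₀ < |η.2.2 / η.2.1| ∧ |η.2.2 / η.2.1| < μ₁) ∨
       (η.2.2 ≠ 0 ∧ μ₀ < |η.1 / η.2.2| ∧ |η.1 / η.2.2| < μ₁ ∧
          μ₀ < |η.2.1 / η.2.2| ∧ |η.2.1 / η.2.2| < μ₁)}

/-!
Write `α(η-ζ) - α(η)` as a telescoping sum over the three factors. For a symbol `a` of order `m`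
in one variable, either `|y| ≤ |x|/2` and the mean value theorem gives
`|a(x-y) - a(x)| ≲ ⟨x⟩^m ⟨y⟩/⟨x⟩`, or `|y| ≥ |x|/2`, where the triangle inequality suffices because
`⟨y⟩/⟨x⟩` is bounded below. Only a power `θ ≤ 1` of the gain `⟨y⟩/⟨x⟩` is kept. On the elliptic
cones every `⟨ηᵢ⟩` is comparable to `⟨η⟩`, so the gain becomes `(⟨ζ⟩/⟨η⟩)^θ` whichever factor it
comes from: the power of `⟨ζ⟩` goes into the weight of `b`, that of `⟨η⟩` into the decay of the
error.

After the powers of `⟨η⟩` and of the weights are removed, there remains a product of one-variable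
kernels `⟨x-y⟩^m + ⟨x⟩^{-1/2-e} ⟨y⟩^{m+1/2}` with `e > 0` small. Each is the sum of a convolution
with an integrable function and a Hilbert–Schmidt kernel of rank one, hence bounded on `L²(ℝ)`,
and boundedness on `L²` passes to tensor products.
-/

section L2BoundedKernel

variable {X X' Y Y' : Type*} [MeasurableSpace X] [MeasurableSpace X'] [MeasurableSpace Y]
  [MeasurableSpace Y'] {μ : Measure X} {μ' : Measure X'} {ν : Measure Y} {ν' : Measure Y'}

/-- A nonnegative kernel `K` whose integral operator `f ↦ ∫ K(·, y) f(y) dν(y)` is bounded from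
`L²(ν)` to `L²(μ)`. It suffices to test the operator on nonnegative functions. -/
structure IsL2BoundedKernel (K : X → Y → ENNReal) (μ : Measure X) (ν : Measure Y) : Prop where
  measurable : Measurable (Function.uncurry K)
  exists_bound : ∃ C : ENNReal, C ≠ ⊤ ∧ ∀ f : Y → ENNReal, Measurable f →
    ∫⁻ x, (∫⁻ y, K x y * f y ∂ν) ^ 2 ∂μ ≤ C * ∫⁻ y, f y ^ 2 ∂ν

lemma sq_lintegral_mul_le {f g : Y → ENNReal} (hf : AEMeasurable f ν) (hg : AEMeasurable g ν) :
    (∫⁻ y, f y * g y ∂ν) ^ 2 ≤ (∫⁻ y, f y ^ 2 ∂ν) * ∫⁻ y, g y ^ 2 ∂ν := by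
  have hölder := ENNReal.lintegral_mul_le_Lp_mul_Lq ν Real.HolderConjugate.two_two hf hg
  have sqrt_sq (a : ENNReal) : (a ^ (1 / 2 : ℝ)) ^ 2 = a := by
    rw [← ENNReal.rpow_natCast, ← ENNReal.rpow_mul]
    norm_num
  simp only [Pi.mul_apply, ENNReal.rpow_ofNat] at hölder
  calc _ ≤ _ := pow_le_pow_left' hölder 2
    _ = _ := by rw [mul_pow, sqrt_sq, sqrt_sq]

lemma sq_lintegral_mul_le_lintegral_mul_lintegral_mul_sq {k f : Y → ENNReal} (hk : Measurable k)
    (hf : Measurable f) :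
    (∫⁻ y, k y * f y ∂ν) ^ 2 ≤ (∫⁻ y, k y ∂ν) * ∫⁻ y, k y * f y ^ 2 ∂ν := by
  have h := sq_lintegral_mul_le (ν := ν.withDensity k) (f := 1) aemeasurable_const hf.aemeasurable
  simpa [lintegral_withDensity_eq_lintegral_mul ν hk hf,
    lintegral_withDensity_eq_lintegral_mul ν hk (hf.pow_const 2)] using h

lemma lintegral_prod_mul_mul [SFinite ν] [SFinite ν'] {k : Y → ENNReal} {l : Y' → ENNReal}
    {f : Y × Y' → ENNReal} (hk : Measurable k) (hl : Measurable l) (hf : Measurable f) :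
    ∫⁻ y, k y.1 * l y.2 * f y ∂ν.prod ν' = ∫⁻ y', l y' * ∫⁻ y, k y * f (y, y') ∂ν ∂ν' := by
  rw [lintegral_prod_symm' _ (by fun_prop)]
  refine lintegral_congr fun y' => ?_
  rw [← lintegral_const_mul _ (by fun_prop)]
  exact lintegral_congr fun y => by ring

namespace IsL2BoundedKernel

lemma measurable_lintegral [SFinite ν] {K : X → Y → ENNReal} (hK : IsL2BoundedKernel K μ ν)
    {f : Y → ENNReal} (hf : AEMeasurable f ν) : Measurable fun x => ∫⁻ y, K x y * f y ∂ν := by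
  have h : ∀ x, ∫⁻ y, K x y * f y ∂ν = ∫⁻ y, K x y * hf.mk f y ∂ν := fun x =>
    lintegral_congr_ae (hf.ae_eq_mk.mono fun y hy => by simp only [hy])
  simp only [h]
  exact (hK.measurable.mul (hf.measurable_mk.comp measurable_snd)).lintegral_prod_right'

lemma lintegral_sq_lt_top {K : X → Y → ENNReal} (hK : IsL2BoundedKernel K μ ν)
    {f : Y → ENNReal} (hf : AEMeasurable f ν) (hf₂ : ∫⁻ y, f y ^ 2 ∂ν < ⊤) :
    ∫⁻ x, (∫⁻ y, K x y * f y ∂ν) ^ 2 ∂μ < ⊤ := by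
  obtain ⟨C, hC, hbound⟩ := hK.exists_bound
  have hK_mk : ∀ x, ∫⁻ y, K x y * f y ∂ν = ∫⁻ y, K x y * hf.mk f y ∂ν := fun x =>
    lintegral_congr_ae (hf.ae_eq_mk.mono fun y hy => by simp only [hy])
  have hf_mk : ∫⁻ y, hf.mk f y ^ 2 ∂ν = ∫⁻ y, f y ^ 2 ∂ν :=
    lintegral_congr_ae (hf.ae_eq_mk.mono fun y hy => by simp only [hy])
  simp only [hK_mk]
  refine (hbound _ hf.measurable_mk).trans_lt ?_
  rw [hf_mk]
  exact ENNReal.mul_lt_top hC.lt_top hf₂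

lemma of_lintegral_le [SFinite μ] [SFinite ν] {K : X → Y → ENNReal}
    (hK : Measurable (Function.uncurry K)) {A B : ENNReal} (hA : A ≠ ⊤) (hB : B ≠ ⊤)
    (hKA : ∀ x, ∫⁻ y, K x y ∂ν ≤ A) (hKB : ∀ y, ∫⁻ x, K x y ∂μ ≤ B) :
    IsL2BoundedKernel K μ ν := by
  refine ⟨hK, A * B, ENNReal.mul_ne_top hA hB, fun f hf => ?_⟩
  have hKx (x : X) : Measurable (K x) := hK.of_uncurry_left
  have hKf : Measurable (Function.uncurry fun x y => K x y * f y ^ 2) :=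
    hK.mul ((hf.comp measurable_snd).pow_const 2)
  calc ∫⁻ x, (∫⁻ y, K x y * f y ∂ν) ^ 2 ∂μ
      ≤ ∫⁻ x, A * ∫⁻ y, K x y * f y ^ 2 ∂ν ∂μ := lintegral_mono fun x =>
        (sq_lintegral_mul_le_lintegral_mul_lintegral_mul_sq (hKx x) hf).trans
          (mul_le_mul_left (hKA x) _)
    _ = A * ∫⁻ y, ∫⁻ x, K x y * f y ^ 2 ∂μ ∂ν := by
        rw [lintegral_const_mul' _ _ hA, lintegral_lintegral_swap hKf.aemeasurable]
    _ = A * ∫⁻ y, (∫⁻ x, K x y ∂μ) * f y ^ 2 ∂ν := by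
        simp only [lintegral_mul_const _ hK.of_uncurry_right]
    _ ≤ A * ∫⁻ y, B * f y ^ 2 ∂ν := by gcongr with y; exact hKB y
    _ = A * B * ∫⁻ y, f y ^ 2 ∂ν := by rw [lintegral_const_mul' _ _ hB, mul_assoc]

lemma sub {G : Type*} [AddCommGroup G] [MeasurableSpace G] [MeasurableAdd₂ G] [MeasurableNeg G]
    {μ : Measure G} [SFinite μ] [μ.IsAddLeftInvariant] [μ.IsNegInvariant] {k : G → ENNReal}
    (hk : Measurable k) (hk₁ : ∫⁻ z, k z ∂μ ≠ ⊤) :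
    IsL2BoundedKernel (fun x y => k (x - y)) μ μ :=
  of_lintegral_le (hk.comp measurable_sub) hk₁ hk₁
    (fun x => (lintegral_sub_left_eq_self k x).le) (fun y => (lintegral_sub_right_eq_self k y).le)

lemma mul {g : X → ENNReal} {h : Y → ENNReal} (hg : Measurable g) (hh : Measurable h)
    (hg₂ : ∫⁻ x, g x ^ 2 ∂μ ≠ ⊤) (hh₂ : ∫⁻ y, h y ^ 2 ∂ν ≠ ⊤) :
    IsL2BoundedKernel (fun x y => g x * h y) μ ν := by
  refine ⟨(hg.comp measurable_fst).mul (hh.comp measurable_snd), _, ENNReal.mul_ne_top hg₂ hh₂,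
    fun f hf => ?_⟩
  calc ∫⁻ x, (∫⁻ y, g x * h y * f y ∂ν) ^ 2 ∂μ
      = (∫⁻ x, g x ^ 2 ∂μ) * (∫⁻ y, h y * f y ∂ν) ^ 2 := by
        have hhf : Measurable fun y => h y * f y := hh.mul hf
        simp only [mul_assoc, lintegral_const_mul _ hhf, mul_pow,
          lintegral_mul_const _ (hg.pow_const 2)]
    _ ≤ (∫⁻ x, g x ^ 2 ∂μ) * ((∫⁻ y, h y ^ 2 ∂ν) * ∫⁻ y, f y ^ 2 ∂ν) := by
        gcongr
        exact sq_lintegral_mul_le hh.aemeasurable hf.aemeasurable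
    _ = _ := (mul_assoc _ _ _).symm

lemma add [SFinite ν] {K L : X → Y → ENNReal} (hK : IsL2BoundedKernel K μ ν)
    (hL : IsL2BoundedKernel L μ ν) : IsL2BoundedKernel (fun x y => K x y + L x y) μ ν := by
  obtain ⟨C, hC, hKC⟩ := hK.exists_bound
  obtain ⟨D, hD, hLD⟩ := hL.exists_bound
  refine ⟨hK.measurable.add hL.measurable, 2 * (C + D), by finiteness, fun f hf => ?_⟩
  have hKf (x : X) : Measurable fun y => K x y * f y := hK.measurable.of_uncurry_left.mul hf
  calc ∫⁻ x, (∫⁻ y, (K x y + L x y) * f y ∂ν) ^ 2 ∂μ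
      ≤ ∫⁻ x, 2 * ((∫⁻ y, K x y * f y ∂ν) ^ 2 + (∫⁻ y, L x y * f y ∂ν) ^ 2) ∂μ := by
        refine lintegral_mono fun x => ?_
        simp only [add_mul, lintegral_add_left (hKf x)]
        simpa [show (2 : ℝ) - 1 = 1 by norm_num] using
          ENNReal.rpow_add_le_mul_rpow_add_rpow (∫⁻ y, K x y * f y ∂ν) (∫⁻ y, L x y * f y ∂ν)
            (p := 2) one_le_two
    _ = 2 * (∫⁻ x, (∫⁻ y, K x y * f y ∂ν) ^ 2 ∂μ + ∫⁻ x, (∫⁻ y, L x y * f y ∂ν) ^ 2 ∂μ) := by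
        rw [lintegral_const_mul' _ _ ENNReal.ofNat_ne_top,
          lintegral_add_left ((hK.measurable_lintegral hf.aemeasurable).pow_const 2)]
    _ ≤ 2 * (C * ∫⁻ y, f y ^ 2 ∂ν + D * ∫⁻ y, f y ^ 2 ∂ν) := by
        gcongr
        exacts [hKC f hf, hLD f hf]
    _ = _ := by ring

/- Apply `L` in the second variable for fixed first variable, and `K` in the first variable for
fixed second variable; no Minkowski inequality is needed, only Tonelli. -/
lemma prod [SFinite μ] [SFinite ν] [SFinite μ'] [SFinite ν'] {K : X → Y → ENNReal}
    {L : X' → Y' → ENNReal} (hK : IsL2BoundedKernel K μ ν) (hL : IsL2BoundedKernel L μ' ν') :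
    IsL2BoundedKernel (fun (x : X × X') (y : Y × Y') => K x.1 y.1 * L x.2 y.2)
      (μ.prod μ') (ν.prod ν') := by
  obtain ⟨C, hC, hKC⟩ := hK.exists_bound
  obtain ⟨D, hD, hLD⟩ := hL.exists_bound
  have hKL : Measurable
      (Function.uncurry fun (x : X × X') (y : Y × Y') => K x.1 y.1 * L x.2 y.2) :=
    (hK.measurable.comp (by fun_prop : Measurable fun z : (X × X') × Y × Y' => (z.1.1, z.2.1))).mul
      (hL.measurable.comp (by fun_prop : Measurable fun z : (X × X') × Y × Y' => (z.1.2, z.2.2)))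
  refine ⟨hKL, D * C, ENNReal.mul_ne_top hD hC, fun f hf => ?_⟩
  set g : X → Y' → ENNReal := fun x y' => ∫⁻ y, K x y * f (y, y') ∂ν
  have hg : Measurable (Function.uncurry g) :=
    ((hK.measurable.comp (by fun_prop : Measurable fun z : (X × Y') × Y => (z.1.1, z.2))).mul
      (hf.comp (by fun_prop : Measurable fun z : (X × Y') × Y =>
        (z.2, z.1.2)))).lintegral_prod_right'
  have iterate (x : X) (x' : X') : ∫⁻ y : Y × Y', K x y.1 * L x' y.2 * f y ∂ν.prod ν' =
      ∫⁻ y', L x' y' * g x y' ∂ν' :=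
    lintegral_prod_mul_mul hK.measurable.of_uncurry_left hL.measurable.of_uncurry_left hf
  have hLg : Measurable fun z : X × X' => (∫⁻ y', L z.2 y' * g z.1 y' ∂ν') ^ 2 :=
    ((hL.measurable.comp (by fun_prop : Measurable fun w : (X × X') × Y' => (w.1.2, w.2))).mul
      (hg.comp (by fun_prop : Measurable fun w : (X × X') × Y' =>
        (w.1.1, w.2)))).lintegral_prod_right'.pow_const 2
  calc ∫⁻ x : X × X', (∫⁻ y : Y × Y', K x.1 y.1 * L x.2 y.2 * f y ∂ν.prod ν') ^ 2 ∂μ.prod μ'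
      = ∫⁻ x, ∫⁻ x', (∫⁻ y', L x' y' * g x y' ∂ν') ^ 2 ∂μ' ∂μ := by
        simp only [iterate]
        exact lintegral_prod _ hLg.aemeasurable
    _ ≤ ∫⁻ x, D * ∫⁻ y', g x y' ^ 2 ∂ν' ∂μ :=
        lintegral_mono fun x => hLD _ hg.of_uncurry_left
    _ = D * ∫⁻ y', ∫⁻ x, g x y' ^ 2 ∂μ ∂ν' := by
        have hg₂ : Measurable (Function.uncurry fun x y' => g x y' ^ 2) := hg.pow_const 2
        rw [lintegral_const_mul' _ _ hD, lintegral_lintegral_swap hg₂.aemeasurable]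
    _ ≤ D * ∫⁻ y', C * ∫⁻ y, f (y, y') ^ 2 ∂ν ∂ν' := by
        gcongr with y'
        exact hKC _ (hf.comp measurable_prodMk_right)
    _ = D * C * ∫⁻ y, f y ^ 2 ∂ν.prod ν' := by
        rw [lintegral_const_mul' _ _ hC, mul_assoc, ← lintegral_prod_symm' _ (hf.pow_const 2)]

end IsL2BoundedKernel

end L2BoundedKernel

section Bracket

lemma rpow_le_rpow_abs_mul_rpow {M s t : ℝ} (hs : 0 < s) (ht : 0 < t) (hst : s ≤ M * t)
    (hts : t ≤ M * s) (κ : ℝ) : s ^ κ ≤ M ^ |κ| * t ^ κ := by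
  have hM : 0 < M := pos_of_mul_pos_left (hs.trans_le hst) ht.le
  rcases le_total 0 κ with hκ | hκ
  · rw [abs_of_nonneg hκ, ← Real.mul_rpow hM.le ht.le]
    exact Real.rpow_le_rpow hs.le hst hκ
  · have h : (M * s) ^ κ ≤ t ^ κ := Real.rpow_le_rpow_of_nonpos ht hts hκ
    rw [Real.mul_rpow hM.le hs.le] at h
    rwa [abs_of_nonpos hκ, Real.rpow_neg hM.le, le_inv_mul_iff₀ (by positivity)]

lemma one_le_br (s : ℝ) : 1 ≤ br s := Real.one_le_sqrt.2 (by nlinarith [sq_nonneg s])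

lemma br_pos (s : ℝ) : 0 < br s := one_pos.trans_le (one_le_br s)

lemma br_rpow_nonneg (s κ : ℝ) : 0 ≤ br s ^ κ := Real.rpow_nonneg (br_pos s).le κ

lemma br_sq (s : ℝ) : br s ^ 2 = 1 + s ^ 2 := Real.sq_sqrt (by positivity)

lemma abs_le_br (s : ℝ) : |s| ≤ br s := Real.abs_le_sqrt (by linarith)

lemma br_le_one_add_abs (s : ℝ) : br s ≤ 1 + |s| :=
  Real.sqrt_le_iff.2 ⟨by positivity, by nlinarith [sq_abs s, abs_nonneg s]⟩

lemma one_add_abs_le_two_mul_br (s : ℝ) : 1 + |s| ≤ 2 * br s := by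
  linarith [one_le_br s, abs_le_br s]

lemma br_le_mul_br {M s t : ℝ} (hM : 1 ≤ M) (hst : |s| ≤ M * |t|) : br s ≤ M * br t := by
  refine Real.sqrt_le_iff.2 ⟨mul_nonneg (by linarith) (br_pos t).le, ?_⟩
  have h : s ^ 2 ≤ M ^ 2 * t ^ 2 := by
    rw [← sq_abs s, ← sq_abs t, ← mul_pow]
    exact pow_le_pow_left₀ (abs_nonneg s) hst 2
  rw [mul_pow, br_sq]
  nlinarith

@[fun_prop]
lemma continuous_br : Continuous br := by unfold br; fun_prop

lemma continuous_br_rpow (κ : ℝ) : Continuous fun s => br s ^ κ :=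
  continuous_br.rpow_const fun s => .inl (br_pos s).ne'

lemma br_rpow_le_of_abs_sub_le {s t : ℝ} (h : |t - s| ≤ |s| / 2) (κ : ℝ) :
    br t ^ κ ≤ 2 ^ |κ| * br s ^ κ :=
  rpow_le_rpow_abs_mul_rpow (br_pos t) (br_pos s)
    (br_le_mul_br one_le_two (by linarith [abs_sub_abs_le_abs_sub t s, abs_nonneg s]))
    (br_le_mul_br one_le_two (by linarith [abs_sub_abs_le_abs_sub s t, abs_sub_comm s t])) κ

lemma integrable_br_rpow {q : ℝ} (hq : q < -1) : Integrable fun s => br s ^ q := by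
  have h := integrable_rpow_neg_one_add_norm_sq (E := ℝ) (μ := volume) (r := -q)
    (by rw [Module.finrank_self]; push_cast; linarith)
  refine h.congr (.of_forall fun s => ?_)
  simp only [br, Real.sqrt_eq_rpow]
  rw [← Real.rpow_mul (by positivity), Real.norm_eq_abs, sq_abs]
  ring_nf

lemma memLp_two_br_rpow {q : ℝ} (hq : q < -1 / 2) : MemLp (fun s => br s ^ q) 2 := by
  rw [memLp_two_iff_integrable_sq (continuous_br_rpow q).aestronglyMeasurable]
  refine (integrable_br_rpow (q := q * 2) (by linarith)).congr (.of_forall fun s => ?_)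
  simp only [Real.rpow_mul (br_pos s).le, Real.rpow_two]

lemma one_le_br3 (η : ℝ × ℝ × ℝ) : 1 ≤ br3 η := Real.one_le_sqrt.2 (by nlinarith)

lemma br3_pos (η : ℝ × ℝ × ℝ) : 0 < br3 η := one_pos.trans_le (one_le_br3 η)

@[fun_prop]
lemma continuous_br3 : Continuous br3 := by unfold br3; fun_prop

lemma continuous_br3_rpow (κ : ℝ) : Continuous fun η => br3 η ^ κ :=
  continuous_br3.rpow_const fun η => .inl (br3_pos η).ne'

lemma br_fst_le_br3 (η : ℝ × ℝ × ℝ) : br η.1 ≤ br3 η := Real.sqrt_le_sqrt (by nlinarith)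

lemma br_snd_fst_le_br3 (η : ℝ × ℝ × ℝ) : br η.2.1 ≤ br3 η := Real.sqrt_le_sqrt (by nlinarith)

lemma br_snd_snd_le_br3 (η : ℝ × ℝ × ℝ) : br η.2.2 ≤ br3 η := Real.sqrt_le_sqrt (by nlinarith)

lemma br3_le_add (η : ℝ × ℝ × ℝ) : br3 η ≤ br η.1 + br η.2.1 + br η.2.2 := by
  have h₁ := br_pos η.1
  have h₂ := br_pos η.2.1
  have h₃ := br_pos η.2.2
  refine Real.sqrt_le_iff.2 ⟨by positivity, ?_⟩
  nlinarith [br_sq η.1, br_sq η.2.1, br_sq η.2.2, mul_pos h₁ h₂, mul_pos h₁ h₃, mul_pos h₂ h₃]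

end Bracket

section EllipticCone

/-- The region where each bracket `⟨ηᵢ⟩` is comparable to `⟨η⟩` with constant `M`; this is the only
property of the cones `Υ_{μ₀,μ₁}` that the error estimate needs. -/
def ellipticCone (M : ℝ) : Set (ℝ × ℝ × ℝ) :=
  {η | br3 η ≤ M * br η.1 ∧ br3 η ≤ M * br η.2.1 ∧ br3 η ≤ M * br η.2.2}

lemma isClosed_ellipticCone (M : ℝ) : IsClosed (ellipticCone M) := by
  simp only [ellipticCone, Set.ofPred_and]
  exact (isClosed_le (by fun_prop) (by fun_prop)).inter
    ((isClosed_le (by fun_prop) (by fun_prop)).inter (isClosed_le (by fun_prop) (by fun_prop)))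

lemma br_le_mul_br_of_abs_div_mem {μ₀ μ₁ s t N : ℝ} (hμ₀ : 0 < μ₀) (hN : 1 ≤ N) (hN₀ : μ₀⁻¹ ≤ N)
    (hN₁ : μ₁ ≤ N) (hs : s ≠ 0) (hl : μ₀ < |t / s|) (hu : |t / s| < μ₁) :
    br t ≤ N * br s ∧ br s ≤ N * br t := by
  have hs' : 0 < |s| := abs_pos.2 hs
  rw [abs_div, lt_div_iff₀ hs'] at hl
  rw [abs_div, div_lt_iff₀ hs'] at hu
  have hN₀' : 1 ≤ N * μ₀ := (inv_le_iff_one_le_mul₀ hμ₀).1 hN₀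
  exact ⟨br_le_mul_br hN (by nlinarith), br_le_mul_br hN (by nlinarith)⟩

lemma le_three_mul_sq_mul_of_pivot {N p q r : ℝ} (hN : 1 ≤ N) (hp : 0 < p)
    (hqp : q ≤ N * p) (hrp : r ≤ N * p) (hpq : p ≤ N * q) (hpr : p ≤ N * r) :
    p + q + r ≤ 3 * N ^ 2 * p ∧ p + q + r ≤ 3 * N ^ 2 * q ∧ p + q + r ≤ 3 * N ^ 2 * r := by
  have hsum : p + q + r ≤ 3 * (N * p) := by nlinarith
  have hNp : N * p ≤ N ^ 2 * p := by nlinarith [mul_pos (by linarith : 0 < N) hp]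
  have hNq : N * p ≤ N ^ 2 * q := by nlinarith
  have hNr : N * p ≤ N ^ 2 * r := by nlinarith
  exact ⟨by linarith, by linarith, by linarith⟩

lemma exists_Upsilon_subset_ellipticCone {μ₀ : ℝ} (hμ₀ : 0 < μ₀) (μ₁ : ℝ) :
    ∃ M, 1 ≤ M ∧ Upsilon μ₀ μ₁ ⊆ ellipticCone M := by
  obtain ⟨N, hN⟩ : ∃ N : ℝ, 1 ≤ N ∧ μ₀⁻¹ ≤ N ∧ μ₁ ≤ N :=
    ⟨max 1 (max μ₀⁻¹ μ₁), by simp⟩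
  obtain ⟨hN, hN₀, hN₁⟩ := hN
  refine ⟨3 * N ^ 2, by nlinarith, fun η hη => ?_⟩
  have hη₃ := br3_le_add η
  have ratio {s t : ℝ} := br_le_mul_br_of_abs_div_mem (s := s) (t := t) hμ₀ hN hN₀ hN₁
  rcases hη with ⟨h, hl, hu, hl', hu'⟩ | ⟨h, hl, hu, hl', hu'⟩ | ⟨h, hl, hu, hl', hu'⟩ <;>
    obtain ⟨hqp, hpq⟩ := ratio h hl hu <;> obtain ⟨hrp, hpr⟩ := ratio h hl' hu' <;>
    obtain ⟨hp, hq, hr⟩ := le_three_mul_sq_mul_of_pivot hN (br_pos _) hqp hrp hpq hpr <;>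
    exact ⟨by linarith, by linarith, by linarith⟩

end EllipticCone

section Symbol

/-- Symbols of order `m` of which only the value and the first derivative are controlled. -/
structure IsFirstOrderSymbol (m : ℝ) (a : ℝ → ℂ) : Prop where
  differentiable : Differentiable ℝ a
  exists_bound : ∃ C, ∀ s, ‖a s‖ ≤ C * br s ^ m ∧ ‖deriv a s‖ ≤ C * br s ^ (m - 1)

lemma one_add_abs_rpow_le (s κ : ℝ) : (1 + |s|) ^ κ ≤ 2 ^ |κ| * br s ^ κ :=
  rpow_le_rpow_abs_mul_rpow (by positivity) (br_pos s) (one_add_abs_le_two_mul_br s)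
    (by linarith [br_le_one_add_abs s, abs_nonneg s]) κ

variable {m : ℝ} {a : ℝ → ℂ}

lemma IsSymbol.exists_norm_iteratedDeriv_le (ha : IsSymbol m a) (k : ℕ) :
    ∃ C, 0 ≤ C ∧ ∀ s, ‖iteratedDeriv k a s‖ ≤ C * br s ^ (m - k) := by
  obtain ⟨C, hC⟩ := ha.2 k
  refine ⟨|C| * 2 ^ |m - k|, by positivity, fun s => ?_⟩
  calc ‖iteratedDeriv k a s‖ ≤ C * (1 + |s|) ^ (m - k) := hC s
    _ ≤ |C| * (2 ^ |m - k| * br s ^ (m - k)) := by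
        gcongr
        exacts [le_abs_self C, one_add_abs_rpow_le s _]
    _ = _ := (mul_assoc _ _ _).symm

lemma IsSymbol.isFirstOrderSymbol (ha : IsSymbol m a) : IsFirstOrderSymbol m a := by
  obtain ⟨C, hC, hCa⟩ := ha.exists_norm_iteratedDeriv_le 0
  obtain ⟨D, hD, hDa⟩ := ha.exists_norm_iteratedDeriv_le 1
  simp only [iteratedDeriv_zero, iteratedDeriv_one, Nat.cast_zero, Nat.cast_one, sub_zero]
    at hCa hDa
  exact ⟨ha.1.differentiable (by simp), C + D, fun s =>
    ⟨(hCa s).trans (mul_le_mul_of_nonneg_right (by linarith) (br_rpow_nonneg s _)),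
      (hDa s).trans (mul_le_mul_of_nonneg_right (by linarith) (br_rpow_nonneg s _))⟩⟩

namespace IsFirstOrderSymbol

lemma exists_nonneg_bound (ha : IsFirstOrderSymbol m a) :
    ∃ C, 0 ≤ C ∧ ∀ s, ‖a s‖ ≤ C * br s ^ m ∧ ‖deriv a s‖ ≤ C * br s ^ (m - 1) := by
  obtain ⟨C, hC⟩ := ha.exists_bound
  exact ⟨C, nonneg_of_mul_nonneg_left ((norm_nonneg _).trans (hC 0).1)
    (Real.rpow_pos_of_pos (br_pos 0) m), hC⟩

lemma exists_norm_le (ha : IsFirstOrderSymbol m a) (hm : m ≤ 0) : ∃ C, ∀ s, ‖a s‖ ≤ C := by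
  obtain ⟨C, hC, hbound⟩ := ha.exists_nonneg_bound
  exact ⟨C, fun s => (hbound s).1.trans
    (mul_le_of_le_one_right hC (Real.rpow_le_one_of_one_le_of_nonpos (one_le_br s) hm))⟩

end IsFirstOrderSymbol

end Symbol

section ErrorKernel

/-- Two elements of size at most `B` whose difference is smaller by the factor `T`. -/
structure BoundedPair {E : Type*} [SeminormedAddCommGroup E] (u v : E) (B T : ℝ) : Prop where
  norm_left : ‖u‖ ≤ B
  norm_right : ‖v‖ ≤ B
  norm_sub : ‖u - v‖ ≤ B * T

namespace BoundedPair

lemma mono {E : Type*} [SeminormedAddCommGroup E] {u v : E} {B B' T T' : ℝ}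
    (h : BoundedPair u v B T) (hT' : 0 ≤ T') (hB : B ≤ B') (hT : T ≤ T') :
    BoundedPair u v B' T' where
  norm_left := h.norm_left.trans hB
  norm_right := h.norm_right.trans hB
  norm_sub := h.norm_sub.trans <|
    (mul_le_mul_of_nonneg_left hT ((norm_nonneg u).trans h.norm_left)).trans
      (mul_le_mul_of_nonneg_right hB hT')

lemma of_norm_le {E : Type*} [SeminormedAddCommGroup E] {u v : E} {B T : ℝ} (hu : ‖u‖ ≤ B)
    (hv : ‖v‖ ≤ B) (hT : 1 / 2 ≤ T) : BoundedPair u v (4 * B) T := by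
  have hB : 0 ≤ B := (norm_nonneg u).trans hu
  exact ⟨by linarith, by linarith, (norm_sub_le u v).trans (by nlinarith)⟩

lemma mul {R : Type*} [SeminormedRing R] {u₁ v₁ u₂ v₂ : R} {B₁ B₂ T₁ T₂ : ℝ}
    (h₁ : BoundedPair u₁ v₁ B₁ T₁) (h₂ : BoundedPair u₂ v₂ B₂ T₂) :
    BoundedPair (u₁ * u₂) (v₁ * v₂) (B₁ * B₂) (T₁ + T₂) where
  norm_left := norm_mul_le_of_le h₁.norm_left h₂.norm_left
  norm_right := norm_mul_le_of_le h₁.norm_right h₂.norm_right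
  norm_sub := by
    have split : u₁ * u₂ - v₁ * v₂ = (u₁ - v₁) * u₂ + v₁ * (u₂ - v₂) := by noncomm_ring
    calc ‖u₁ * u₂ - v₁ * v₂‖ ≤ B₁ * T₁ * B₂ + B₁ * (B₂ * T₂) := by
          rw [split]
          exact norm_add_le_of_le (norm_mul_le_of_le h₁.norm_sub h₂.norm_left)
            (norm_mul_le_of_le h₁.norm_right h₂.norm_sub)
      _ = B₁ * B₂ * (T₁ + T₂) := by ring

end BoundedPair

/-- The kernel in one variable that dominates the error `a(x - y) - a(x)` for a symbol `a` of order
`m`, once the powers of `⟨x⟩` and `⟨y⟩` that go into the weights are removed. The convolution part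
covers `a(x - y)` and the part of rank one covers `a(x)`. -/
def errorKernel (m e x y : ℝ) : ℝ :=
  br (x - y) ^ m + br x ^ (-1 / 2 - e) * br y ^ (m + 1 / 2)

lemma errorKernel_nonneg (m e x y : ℝ) : 0 ≤ errorKernel m e x y :=
  add_nonneg (br_rpow_nonneg _ _) (mul_nonneg (br_rpow_nonneg _ _) (br_rpow_nonneg _ _))

lemma isL2BoundedKernel_errorKernel {m e : ℝ} (hm : m < -1) (he : 0 < e) :
    IsL2BoundedKernel (fun x y => ENNReal.ofReal (errorKernel m e x y)) volume volume := by
  have measurable_br (κ : ℝ) : Measurable fun s => ENNReal.ofReal (br s ^ κ) :=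
    (continuous_br_rpow κ).measurable.ennreal_ofReal
  have sq_ne_top {q : ℝ} (hq : q < -1 / 2) : ∫⁻ s, ENNReal.ofReal (br s ^ q) ^ 2 ≠ ⊤ := by
    simp only [← ENNReal.ofReal_pow (br_rpow_nonneg _ q)]
    exact (memLp_two_br_rpow hq).integrable_sq.lintegral_lt_top.ne
  have convolution := IsL2BoundedKernel.sub (μ := volume) (measurable_br m)
    (integrable_br_rpow hm).lintegral_lt_top.ne
  have rank_one := IsL2BoundedKernel.mul (μ := volume) (ν := volume)
    (measurable_br (-1 / 2 - e)) (measurable_br (m + 1 / 2)) (sq_ne_top (by linarith))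
    (sq_ne_top (by linarith))
  convert convolution.add rank_one using 3 with x y
  rw [errorKernel, ENNReal.ofReal_add (br_rpow_nonneg _ _)
    (mul_nonneg (br_rpow_nonneg _ _) (br_rpow_nonneg _ _)), ENNReal.ofReal_mul (br_rpow_nonneg _ _)]

lemma br_rpow_le_mul_errorKernel (m e x y : ℝ) :
    br x ^ m ≤ br x ^ (m + 1 / 2 + e) * (br y ^ (-m - 1 / 2) * errorKernel m e x y) := by
  have hx := br_pos x
  have hy := br_pos y
  have hxy := br_pos (x - y)
  calc br x ^ m = br x ^ (m + 1 / 2 + e) * br x ^ (-1 / 2 - e) *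
        (br y ^ (-m - 1 / 2) * br y ^ (m + 1 / 2)) := by
        rw [← Real.rpow_add hx, ← Real.rpow_add hy]
        ring_nf
        simp
    _ = br x ^ (m + 1 / 2 + e) * (br y ^ (-m - 1 / 2) *
        (br x ^ (-1 / 2 - e) * br y ^ (m + 1 / 2))) := by ring
    _ ≤ _ := by
        rw [errorKernel]
        gcongr
        exact le_add_of_nonneg_left (by positivity)

lemma br_sub_rpow_le_mul_errorKernel {m e x y : ℝ} (hm : m ≤ -1 / 2) (he : 0 ≤ e)
    (hxy : br x ≤ 2 * br y) :
    br (x - y) ^ m ≤ 2 ^ (-m - 1 / 2) *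
      (br x ^ (m + 1 / 2 + e) * (br y ^ (-m - 1 / 2) * errorKernel m e x y)) := by
  have hx := br_pos x
  have hy := br_pos y
  have hsub := br_pos (x - y)
  have one_le : 1 ≤ br x ^ (m + 1 / 2 + e) * (2 * br y) ^ (-m - 1 / 2) :=
    calc (1 : ℝ) ≤ br x ^ e := Real.one_le_rpow (one_le_br x) he
      _ = br x ^ (m + 1 / 2 + e) * br x ^ (-m - 1 / 2) := by
          rw [← Real.rpow_add hx]
          ring_nf
      _ ≤ _ := by
          gcongr
          linarith
  calc br (x - y) ^ m
      ≤ br x ^ (m + 1 / 2 + e) * (2 * br y) ^ (-m - 1 / 2) * br (x - y) ^ m :=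
        le_mul_of_one_le_left (by positivity) one_le
    _ = 2 ^ (-m - 1 / 2) * (br x ^ (m + 1 / 2 + e) *
        (br y ^ (-m - 1 / 2) * br (x - y) ^ m)) := by
        rw [Real.mul_rpow two_pos.le hy.le]
        ring
    _ ≤ _ := by
        rw [errorKernel]
        gcongr
        exact le_add_of_nonneg_right (by positivity)

namespace IsFirstOrderSymbol

variable {m : ℝ} {a : ℝ → ℂ}

lemma exists_boundedPair_of_abs_le (ha : IsFirstOrderSymbol m a) :
    ∃ A, 0 ≤ A ∧ ∀ x y, |y| ≤ |x| / 2 →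
      BoundedPair (a (x - y)) (a x) (A * br x ^ m) (br y / br x) := by
  obtain ⟨C, hC, hbound⟩ := ha.exists_nonneg_bound
  refine ⟨C * 2 ^ |m| + C * 2 ^ |m - 1|, by positivity, fun x y hy => ?_⟩
  have hx := br_pos x
  have near {t κ : ℝ} (ht : |t - x| ≤ |x| / 2) : C * br t ^ κ ≤ C * 2 ^ |κ| * br x ^ κ := by
    rw [mul_assoc]
    exact mul_le_mul_of_nonneg_left (br_rpow_le_of_abs_sub_le ht κ) hC
  have hxy : |x - y - x| ≤ |x| / 2 := by simpa using hy
  have value_le {t : ℝ} (ht : |t - x| ≤ |x| / 2) :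
      ‖a t‖ ≤ (C * 2 ^ |m| + C * 2 ^ |m - 1|) * br x ^ m :=
    ((hbound t).1.trans (near ht)).trans <| by
      gcongr
      exact le_add_of_nonneg_right (by positivity)
  have mean_value : ‖a (x - y) - a x‖ ≤ C * 2 ^ |m - 1| * br x ^ (m - 1) * ‖x - y - x‖ :=
    (convex_closedBall x (|x| / 2)).norm_image_sub_le_of_norm_deriv_le
      (fun t _ => ha.differentiable t) (fun t ht => (hbound t).2.trans (near ht))
      (Metric.mem_closedBall_self (by positivity)) hxy
  refine ⟨value_le hxy, value_le (by simpa using by positivity), mean_value.trans ?_⟩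
  calc C * 2 ^ |m - 1| * br x ^ (m - 1) * ‖x - y - x‖
      ≤ (C * 2 ^ |m| + C * 2 ^ |m - 1|) * br x ^ (m - 1) * br y := by
        gcongr
        · exact le_add_of_nonneg_left (by positivity)
        · simpa using abs_le_br y
    _ = _ := by
        rw [Real.rpow_sub_one hx.ne']
        ring

lemma exists_boundedPair_of_le_abs (ha : IsFirstOrderSymbol m a) (hm : m ≤ -1 / 2) {e θ : ℝ}
    (he : 0 ≤ e) (hθ₀ : 0 ≤ θ) (hθ₁ : θ ≤ 1) :
    ∃ A, ∀ x y, |x| / 2 ≤ |y| → BoundedPair (a (x - y)) (a x)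
      (A * (br x ^ (m + 1 / 2 + e) * (br y ^ (-m - 1 / 2) * errorKernel m e x y)))
      ((br y / br x) ^ θ) := by
  obtain ⟨C, hC, hbound⟩ := ha.exists_nonneg_bound
  refine ⟨4 * (C * 2 ^ (-m - 1 / 2)), fun x y hxy => ?_⟩
  have hx := br_pos x
  have hbr : br x ≤ 2 * br y := br_le_mul_br one_le_two (by linarith)
  have gain : 1 / 2 ≤ (br y / br x) ^ θ :=
    calc (1 / 2 : ℝ) ≤ (1 / 2) ^ θ := Real.self_le_rpow_of_le_one (by norm_num) (by norm_num) hθ₁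
      _ ≤ (br y / br x) ^ θ :=
          Real.rpow_le_rpow (by norm_num) ((div_le_div_iff₀ two_pos hx).2 (by linarith)) hθ₀
  set F := br x ^ (m + 1 / 2 + e) * (br y ^ (-m - 1 / 2) * errorKernel m e x y)
  have hxF : br x ^ m ≤ F := br_rpow_le_mul_errorKernel m e x y
  have hF : F ≤ 2 ^ (-m - 1 / 2) * F :=
    le_mul_of_one_le_left ((br_rpow_nonneg x m).trans hxF)
      (Real.one_le_rpow one_le_two (by linarith))
  have hxyF : br (x - y) ^ m ≤ 2 ^ (-m - 1 / 2) * F := br_sub_rpow_le_mul_errorKernel hm he hbr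
  rw [mul_assoc, mul_assoc C]
  exact .of_norm_le ((hbound _).1.trans (mul_le_mul_of_nonneg_left hxyF hC))
    ((hbound _).1.trans (mul_le_mul_of_nonneg_left (hxF.trans hF) hC)) gain

lemma exists_boundedPair (ha : IsFirstOrderSymbol m a) (hm : m ≤ -1 / 2) {e θ : ℝ}
    (he : 0 ≤ e) (hθ₀ : 0 ≤ θ) (hθ₁ : θ ≤ 1) :
    ∃ A, ∀ x y, BoundedPair (a (x - y)) (a x)
      (A * (br x ^ (m + 1 / 2 + e) * (br y ^ (-m - 1 / 2) * errorKernel m e x y)))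
      ((br y / br x) ^ θ) := by
  obtain ⟨A, hA, near⟩ := ha.exists_boundedPair_of_abs_le
  obtain ⟨A', far⟩ := ha.exists_boundedPair_of_le_abs hm he hθ₀ hθ₁
  refine ⟨max A A', fun x y => ?_⟩
  have hxF := br_rpow_le_mul_errorKernel m e x y
  set F := br x ^ (m + 1 / 2 + e) * (br y ^ (-m - 1 / 2) * errorKernel m e x y)
  have hx := br_pos x
  have hy := br_pos y
  have hF : 0 ≤ F := (br_rpow_nonneg x m).trans hxF
  have hT : 0 ≤ (br y / br x) ^ θ := by positivity
  rcases le_total |y| (|x| / 2) with hxy | hxy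
  · have hyx : br y / br x ≤ 1 :=
      div_le_one_of_le₀ ((br_le_mul_br le_rfl (by linarith [abs_nonneg x])).trans_eq
        (one_mul _)) hx.le
    exact (near x y hxy).mono hT
      ((mul_le_mul_of_nonneg_left hxF hA).trans (mul_le_mul_of_nonneg_right (le_max_left A A') hF))
      (Real.self_le_rpow_of_le_one (by positivity) hyx hθ₁)
  · exact (far x y hxy).mono hT (mul_le_mul_of_nonneg_right (le_max_right A A') hF) le_rfl

end IsFirstOrderSymbol

end ErrorKernel

section Tensor

/-- The product-type symbol `α(η) = α₁(η₁) α₂(η₂) α₃(η₃)`. -/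
def tensor (α₁ α₂ α₃ : ℝ → ℂ) (η : ℝ × ℝ × ℝ) : ℂ := α₁ η.1 * α₂ η.2.1 * α₃ η.2.2

/-- The weight `⟨η₁⟩^{-m₁-1/2} ⟨η₂⟩^{-m₂-1/2} ⟨η₃⟩^{-m₃-1/2} ⟨η⟩^θ` imposed on `b`. -/
def weight (m₁ m₂ m₃ θ : ℝ) (η : ℝ × ℝ × ℝ) : ℝ :=
  br η.1 ^ (-m₁ - 1 / 2) * br η.2.1 ^ (-m₂ - 1 / 2) * br η.2.2 ^ (-m₃ - 1 / 2) * br3 η ^ θ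

/-- The tensor product of three one-variable error kernels. -/
def tensorKernel (m₁ m₂ m₃ e : ℝ) (η ζ : ℝ × ℝ × ℝ) : ℝ :=
  errorKernel m₁ e η.1 ζ.1 * (errorKernel m₂ e η.2.1 ζ.2.1 * errorKernel m₃ e η.2.2 ζ.2.2)

variable {m₁ m₂ m₃ θ e : ℝ} {α₁ α₂ α₃ : ℝ → ℂ}

lemma weight_pos (m₁ m₂ m₃ θ : ℝ) (η : ℝ × ℝ × ℝ) : 0 < weight m₁ m₂ m₃ θ η := by
  have h₁ := br_pos η.1
  have h₂ := br_pos η.2.1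
  have h₃ := br_pos η.2.2
  have h := br3_pos η
  rw [weight]
  positivity

lemma continuous_weight (m₁ m₂ m₃ θ : ℝ) : Continuous (weight m₁ m₂ m₃ θ) :=
  ((((continuous_br_rpow _).comp (by fun_prop)).mul
    ((continuous_br_rpow _).comp (by fun_prop))).mul
    ((continuous_br_rpow _).comp (by fun_prop))).mul (continuous_br3_rpow θ)

lemma isL2BoundedKernel_tensorKernel (hm₁ : m₁ < -1) (hm₂ : m₂ < -1) (hm₃ : m₃ < -1)
    (he : 0 < e) :
    IsL2BoundedKernel (fun η ζ => ENNReal.ofReal (tensorKernel m₁ m₂ m₃ e η ζ))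
      volume volume := by
  simp only [tensorKernel, ENNReal.ofReal_mul (errorKernel_nonneg _ _ _ _)]
  exact (isL2BoundedKernel_errorKernel hm₁ he).prod
    ((isL2BoundedKernel_errorKernel hm₂ he).prod (isL2BoundedKernel_errorKernel hm₃ he))

lemma IsFirstOrderSymbol.exists_boundedPair_of_comparable {m : ℝ} {a : ℝ → ℂ}
    (ha : IsFirstOrderSymbol m a) (hm : m ≤ -1 / 2) (he : 0 ≤ e) (hθ₀ : 0 ≤ θ) (hθ₁ : θ ≤ 1)
    {M : ℝ} (hM : 1 ≤ M) :
    ∃ A, 0 ≤ A ∧ ∀ x y R S, br x ≤ R → R ≤ M * br x → br y ≤ S →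
      BoundedPair (a (x - y)) (a x)
        (A * R ^ (m + 1 / 2 + e) * (br y ^ (-m - 1 / 2) * errorKernel m e x y))
        ((M * S / R) ^ θ) := by
  obtain ⟨A, hA⟩ := ha.exists_boundedPair hm he hθ₀ hθ₁
  refine ⟨|A| * M ^ |m + 1 / 2 + e|, by positivity, fun x y R S hxR hRx hyS => ?_⟩
  have hx := br_pos x
  have hy := br_pos y
  have hR : 0 < R := hx.trans_le hxR
  have hS : 0 < S := hy.trans_le hyS
  have hK := errorKernel_nonneg m e x y
  have hpow := rpow_le_rpow_abs_mul_rpow hx hR (hxR.trans (le_mul_of_one_le_left hR.le hM)) hRx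
    (m + 1 / 2 + e)
  have hratio : br y / br x ≤ M * S / R := by
    rw [div_le_div_iff₀ hx hR]
    calc br y * R ≤ S * (M * br x) := by gcongr
      _ = M * S * br x := by ring
  refine (hA x y).mono ?_ ?_ (Real.rpow_le_rpow (by positivity) hratio hθ₀)
  · exact Real.rpow_nonneg ((by positivity : 0 ≤ br y / br x).trans hratio) θ
  · rw [← mul_assoc, mul_assoc |A|]
    gcongr
    exact le_abs_self A

lemma exists_norm_tensor_sub_sub_le (hm₁ : m₁ ≤ -1 / 2) (hm₂ : m₂ ≤ -1 / 2) (hm₃ : m₃ ≤ -1 / 2)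
    (he : 0 ≤ e) (hθ₀ : 0 ≤ θ) (hθ₁ : θ ≤ 1) (hα₁ : IsFirstOrderSymbol m₁ α₁)
    (hα₂ : IsFirstOrderSymbol m₂ α₂) (hα₃ : IsFirstOrderSymbol m₃ α₃) {M : ℝ} (hM : 1 ≤ M) :
    ∃ A, 0 ≤ A ∧ ∀ η ∈ ellipticCone M, ∀ ζ,
      br3 η ^ (θ - (m₁ + m₂ + m₃ + 3 / 2 + 3 * e)) *
          ‖tensor α₁ α₂ α₃ (η - ζ) - tensor α₁ α₂ α₃ η‖ ≤
        A * tensorKernel m₁ m₂ m₃ e η ζ * weight m₁ m₂ m₃ θ ζ := by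
  obtain ⟨A₁, hA₁, h₁⟩ := hα₁.exists_boundedPair_of_comparable hm₁ he hθ₀ hθ₁ hM
  obtain ⟨A₂, hA₂, h₂⟩ := hα₂.exists_boundedPair_of_comparable hm₂ he hθ₀ hθ₁ hM
  obtain ⟨A₃, hA₃, h₃⟩ := hα₃.exists_boundedPair_of_comparable hm₃ he hθ₀ hθ₁ hM
  refine ⟨A₁ * A₂ * A₃ * (3 * M ^ θ), by positivity, fun η ⟨hη₁, hη₂, hη₃⟩ ζ => ?_⟩
  have pair := ((h₁ _ _ _ _ (br_fst_le_br3 η) hη₁ (br_fst_le_br3 ζ)).mul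
    (h₂ _ _ _ _ (br_snd_fst_le_br3 η) hη₂ (br_snd_fst_le_br3 ζ))).mul
    (h₃ _ _ _ _ (br_snd_snd_le_br3 η) hη₃ (br_snd_snd_le_br3 ζ))
  have hR := br3_pos η
  have hS := br3_pos ζ
  have powers : br3 η ^ (θ - (m₁ + m₂ + m₃ + 3 / 2 + 3 * e)) * (br3 η ^ (m₁ + 1 / 2 + e) *
      br3 η ^ (m₂ + 1 / 2 + e) * br3 η ^ (m₃ + 1 / 2 + e) / br3 η ^ θ) = 1 := by
    rw [← Real.rpow_add hR, ← Real.rpow_add hR, ← Real.rpow_sub hR, ← Real.rpow_add hR]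
    ring_nf
    exact Real.rpow_zero _
  refine (mul_le_mul_of_nonneg_left pair.norm_sub (by positivity)).trans_eq ?_
  rw [Real.div_rpow (by positivity) hR.le, Real.mul_rpow (by positivity) hS.le]
  linear_combination (norm := (rw [tensorKernel, weight]; ring1))
    (A₁ * A₂ * A₃ * (3 * M ^ θ) * tensorKernel m₁ m₂ m₃ e η ζ * weight m₁ m₂ m₃ θ ζ) * powers

end Tensor

section WeightedConvolution

variable {m₁ m₂ m₃ θ : ℝ} {α₁ α₂ α₃ : ℝ → ℂ} {b : ℝ × ℝ × ℝ → ℂ}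

lemma memLp_two_inv_weight (hm₁ : m₁ < -1) (hm₂ : m₂ < -1) (hm₃ : m₃ < -1) (hθ : 0 ≤ θ) :
    MemLp (fun η => (weight m₁ m₂ m₃ θ η)⁻¹) 2 volume := by
  have factor {m : ℝ} (hm : m < -1) : Integrable fun s => (br s ^ (m + 1 / 2)) ^ 2 :=
    (memLp_two_br_rpow (by linarith)).integrable_sq
  have hcont : Continuous fun η => (weight m₁ m₂ m₃ θ η)⁻¹ :=
    (continuous_weight m₁ m₂ m₃ θ).inv₀ fun η => (weight_pos m₁ m₂ m₃ θ η).ne'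
  rw [memLp_two_iff_integrable_sq hcont.aestronglyMeasurable]
  refine ((factor hm₁).mul_prod ((factor hm₂).mul_prod (factor hm₃))).mono'
    (hcont.pow 2).aestronglyMeasurable (.of_forall fun η => ?_)
  have h₁ := br_pos η.1
  have h₂ := br_pos η.2.1
  have h₃ := br_pos η.2.2
  have h := br3_pos η
  have inv_br {s : ℝ} (m : ℝ) : br s ^ (m + 1 / 2) = (br s ^ (-m - 1 / 2))⁻¹ := by
    rw [← Real.rpow_neg (br_pos s).le]
    ring_nf
  rw [Real.norm_of_nonneg (sq_nonneg _), ← mul_pow, ← mul_pow, inv_br, inv_br, inv_br,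
    ← mul_inv, ← mul_inv, ← mul_assoc, weight]
  refine pow_le_pow_left₀ (by positivity) (inv_anti₀ (by positivity) ?_) 2
  exact le_mul_of_one_le_right (by positivity) (Real.one_le_rpow (one_le_br3 η) hθ)

lemma integrable_of_memLp_weight_smul (hm₁ : m₁ < -1) (hm₂ : m₂ < -1) (hm₃ : m₃ < -1)
    (hθ : 0 ≤ θ) (hb : MemLp (fun η => weight m₁ m₂ m₃ θ η • b η) 2 volume) :
    Integrable b volume := by
  refine (memLp_one_iff_integrable.1
    (hb.smul (memLp_two_inv_weight hm₁ hm₂ hm₃ hθ) (r := 1))).congr (.of_forall fun η => ?_)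
  exact inv_smul_smul₀ (weight_pos _ _ _ _ η).ne' (b η)

lemma integrable_tensor_sub_mul (hm₁ : m₁ ≤ 0) (hm₂ : m₂ ≤ 0) (hm₃ : m₃ ≤ 0)
    (hα₁ : IsFirstOrderSymbol m₁ α₁) (hα₂ : IsFirstOrderSymbol m₂ α₂)
    (hα₃ : IsFirstOrderSymbol m₃ α₃) (hb : Integrable b) (η : ℝ × ℝ × ℝ) :
    Integrable fun ζ => tensor α₁ α₂ α₃ (η - ζ) * b ζ := by
  obtain ⟨C₁, h₁⟩ := hα₁.exists_norm_le hm₁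
  obtain ⟨C₂, h₂⟩ := hα₂.exists_norm_le hm₂
  obtain ⟨C₃, h₃⟩ := hα₃.exists_norm_le hm₃
  have c₁ := hα₁.differentiable.continuous
  have c₂ := hα₂.differentiable.continuous
  have c₃ := hα₃.differentiable.continuous
  have hcont : Continuous fun ζ => tensor α₁ α₂ α₃ (η - ζ) := by
    unfold tensor
    fun_prop
  exact hb.bdd_mul hcont.aestronglyMeasurable
    (.of_forall fun ζ => norm_mul_le_of_le (norm_mul_le_of_le (h₁ _) (h₂ _)) (h₃ _))

lemma enorm_integral_mul_sub_mul_integral_le {X 𝕜 : Type*} [RCLike 𝕜] [MeasurableSpace X]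
    {μ : Measure X} {f g : X → 𝕜} (c : 𝕜) (hg : Integrable g μ)
    (hfg : Integrable (fun x => f x * g x) μ) :
    ‖(∫ x, f x * g x ∂μ) - c * ∫ x, g x ∂μ‖ₑ ≤ ∫⁻ x, ‖f x - c‖ₑ * ‖g x‖ₑ ∂μ := by
  rw [← integral_const_mul, ← integral_sub hfg (hg.const_mul c)]
  simpa only [← sub_mul, enorm_mul] using
    enorm_integral_le_lintegral_enorm fun x => f x * g x - c * g x

/-- The error `(α⋆b)(η) - α(η) ∫ b` of replacing the convolution by its leading term. -/
def convError (α₁ α₂ α₃ : ℝ → ℂ) (b : ℝ × ℝ × ℝ → ℂ) (η : ℝ × ℝ × ℝ) : ℂ :=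
  (∫ ζ, tensor α₁ α₂ α₃ (η - ζ) * b ζ) - tensor α₁ α₂ α₃ η * ∫ ζ, b ζ

lemma exists_enorm_convError_le (hm₁ : m₁ ≤ -1 / 2) (hm₂ : m₂ ≤ -1 / 2) (hm₃ : m₃ ≤ -1 / 2)
    (hθ₀ : 0 ≤ θ) (hθ₁ : θ ≤ 1) {e : ℝ} (he : 0 ≤ e) (hα₁ : IsFirstOrderSymbol m₁ α₁)
    (hα₂ : IsFirstOrderSymbol m₂ α₂) (hα₃ : IsFirstOrderSymbol m₃ α₃)
    (hb : Integrable b) {M : ℝ} (hM : 1 ≤ M) :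
    ∃ A : ENNReal, A ≠ ⊤ ∧ ∀ η ∈ ellipticCone M,
      ENNReal.ofReal (br3 η ^ (θ - (m₁ + m₂ + m₃ + 3 / 2 + 3 * e))) *
          ‖convError α₁ α₂ α₃ b η‖ₑ ≤
        A * ∫⁻ ζ, ENNReal.ofReal (tensorKernel m₁ m₂ m₃ e η ζ) *
          ‖weight m₁ m₂ m₃ θ ζ • b ζ‖ₑ := by
  obtain ⟨A, hA, hbound⟩ := exists_norm_tensor_sub_sub_le hm₁ hm₂ hm₃ he hθ₀ hθ₁ hα₁ hα₂ hα₃ hM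
  refine ⟨ENNReal.ofReal A, ENNReal.ofReal_ne_top, fun η hη => ?_⟩
  have hαb := integrable_tensor_sub_mul (by linarith) (by linarith) (by linarith) hα₁ hα₂ hα₃ hb η
  set ρ := br3 η ^ (θ - (m₁ + m₂ + m₃ + 3 / 2 + 3 * e))
  have hρ : 0 ≤ ρ := Real.rpow_nonneg (br3_pos η).le _
  calc ENNReal.ofReal ρ * ‖convError α₁ α₂ α₃ b η‖ₑ
      ≤ ENNReal.ofReal ρ *
          ∫⁻ ζ, ‖tensor α₁ α₂ α₃ (η - ζ) - tensor α₁ α₂ α₃ η‖ₑ * ‖b ζ‖ₑ := by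
        gcongr
        exact enorm_integral_mul_sub_mul_integral_le _ hb hαb
    _ = ∫⁻ ζ, ENNReal.ofReal (ρ * ‖tensor α₁ α₂ α₃ (η - ζ) - tensor α₁ α₂ α₃ η‖) * ‖b ζ‖ₑ := by
        rw [← lintegral_const_mul' _ _ ENNReal.ofReal_ne_top]
        simp only [ENNReal.ofReal_mul hρ, ofReal_norm, mul_assoc]
    _ ≤ ∫⁻ ζ, ENNReal.ofReal (A * tensorKernel m₁ m₂ m₃ e η ζ * weight m₁ m₂ m₃ θ ζ) *
          ‖b ζ‖ₑ := by
        gcongr ∫⁻ ζ, ENNReal.ofReal ?_ * _ with ζ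
        exact hbound η hη ζ
    _ = _ := by
        rw [← lintegral_const_mul' _ _ ENNReal.ofReal_ne_top]
        refine lintegral_congr fun ζ => ?_
        rw [ENNReal.ofReal_mul' (weight_pos _ _ _ _ ζ).le, ENNReal.ofReal_mul hA, enorm_smul,
          Real.enorm_of_nonneg (weight_pos _ _ _ _ ζ).le]
        ring

lemma setLIntegral_ellipticCone_convError_lt_top (hm₁ : m₁ < -1) (hm₂ : m₂ < -1) (hm₃ : m₃ < -1)
    (hθ₀ : 0 ≤ θ) (hθ₁ : θ ≤ 1) (hα₁ : IsFirstOrderSymbol m₁ α₁)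
    (hα₂ : IsFirstOrderSymbol m₂ α₂) (hα₃ : IsFirstOrderSymbol m₃ α₃)
    (hb : MemLp (fun η => weight m₁ m₂ m₃ θ η • b η) 2 volume) {M r : ℝ} (hM : 1 ≤ M)
    (hr : r < 2 * θ) :
    ∫⁻ η in ellipticCone M, ENNReal.ofReal
      (br3 η ^ (-2 * (m₁ + m₂ + m₃) - 3 + r) * ‖convError α₁ α₂ α₃ b η‖ ^ 2) < ⊤ := by
  obtain ⟨e, he, rfl⟩ : ∃ e, 0 < e ∧ r = 2 * θ - 6 * e :=
    ⟨(2 * θ - r) / 6, by linarith, by ring⟩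
  obtain ⟨A, hA, hbound⟩ := exists_enorm_convError_le (by linarith) (by linarith) (by linarith)
    hθ₀ hθ₁ he.le hα₁ hα₂ hα₃ (integrable_of_memLp_weight_smul hm₁ hm₂ hm₃ hθ₀ hb) hM
  have hsq (η) : ENNReal.ofReal (br3 η ^ (-2 * (m₁ + m₂ + m₃) - 3 + (2 * θ - 6 * e)) *
      ‖convError α₁ α₂ α₃ b η‖ ^ 2) =
      (ENNReal.ofReal (br3 η ^ (θ - (m₁ + m₂ + m₃ + 3 / 2 + 3 * e))) *
        ‖convError α₁ α₂ α₃ b η‖ₑ) ^ 2 := by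
    have hη := br3_pos η
    rw [← ofReal_norm, ← ENNReal.ofReal_mul (by positivity), ← ENNReal.ofReal_pow (by positivity),
      mul_pow, ← Real.rpow_mul_natCast hη.le]
    push_cast
    ring_nf
  have hL2 : ∫⁻ ζ, ‖weight m₁ m₂ m₃ θ ζ • b ζ‖ₑ ^ 2 < ⊤ := by
    simpa using (lintegral_rpow_enorm_lt_top_of_eLpNorm_lt_top two_ne_zero ENNReal.ofNat_ne_top
      hb.eLpNorm_lt_top)
  simp only [hsq]
  calc _ ≤ ∫⁻ η in ellipticCone M, A ^ 2 * (∫⁻ ζ, ENNReal.ofReal (tensorKernel m₁ m₂ m₃ e η ζ) *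
          ‖weight m₁ m₂ m₃ θ ζ • b ζ‖ₑ) ^ 2 :=
        setLIntegral_mono' (isClosed_ellipticCone M).measurableSet fun η hη => by
          rw [← mul_pow]
          exact pow_le_pow_left' (hbound η hη) 2
    _ ≤ A ^ 2 * ∫⁻ η, (∫⁻ ζ, ENNReal.ofReal (tensorKernel m₁ m₂ m₃ e η ζ) *
          ‖weight m₁ m₂ m₃ θ ζ • b ζ‖ₑ) ^ 2 := by
        rw [← lintegral_const_mul' _ _ (ENNReal.pow_ne_top hA)]
        exact setLIntegral_le_lintegral _ _
    _ < ⊤ := ENNReal.mul_lt_top (ENNReal.pow_lt_top hA.lt_top)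
        ((isL2BoundedKernel_tensorKernel hm₁ hm₂ hm₃ he).lintegral_sq_lt_top
          hb.aestronglyMeasurable.enorm hL2)

end WeightedConvolution

theorem stmt_6_general {m₁ m₂ m₃ θ : ℝ} {α₁ α₂ α₃ : ℝ → ℂ} {b : ℝ × ℝ × ℝ → ℂ} (hm₁ : m₁ < -1)
    (hm₂ : m₂ < -1) (hm₃ : m₃ < -1) (hθ₀ : 0 ≤ θ) (hθ₁ : θ ≤ 1) (hα₁ : IsFirstOrderSymbol m₁ α₁)
    (hα₂ : IsFirstOrderSymbol m₂ α₂) (hα₃ : IsFirstOrderSymbol m₃ α₃)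
    (hb : MemLp (fun η => weight m₁ m₂ m₃ θ η • b η) 2 volume) :
    Integrable b volume ∧
    (∀ η, Integrable (fun ζ => tensor α₁ α₂ α₃ (η - ζ) * b ζ) volume) ∧
    (∀ μ₀ μ₁ r : ℝ, 0 < μ₀ → r < 2 * θ →
      ∫⁻ η in Upsilon μ₀ μ₁, ENNReal.ofReal
        (br3 η ^ (-2 * (m₁ + m₂ + m₃) - 3 + r) * ‖convError α₁ α₂ α₃ b η‖ ^ 2) < ⊤) := by
  have hb₁ := integrable_of_memLp_weight_smul hm₁ hm₂ hm₃ hθ₀ hb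
  refine ⟨hb₁, integrable_tensor_sub_mul (by linarith) (by linarith) (by linarith) hα₁ hα₂ hα₃ hb₁,
    fun μ₀ μ₁ r hμ₀ hr => ?_⟩
  obtain ⟨M, hM, hcone⟩ := exists_Upsilon_subset_ellipticCone hμ₀ μ₁
  exact (lintegral_mono_set hcone).trans_lt
    (setLIntegral_ellipticCone_convError_lt_top hm₁ hm₂ hm₃ hθ₀ hθ₁ hα₁ hα₂ hα₃ hb hM hr)

/-- **Lemma 6.2: asymptotic expansion of the convolution of a product-type symbol
with a weighted `L²` function, in elliptic conic regions.** -/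
theorem stmt_6 (m : ℝ) (hm : m < -(5 / 2 : ℝ))
    (α₁ α₂ α₃ : ℝ → ℂ)
    (hα₁ : IsSymbol m α₁) (hα₂ : IsSymbol m α₂) (hα₃ : IsSymbol m α₃)
    (b : ℝ × ℝ × ℝ → ℂ) (hb : Measurable b)
    (hbw : ∀ δ : ℝ, 0 < δ →
      MemLp (fun η : ℝ × ℝ × ℝ =>
        (br η.1 ^ (-m - 1/2) * br η.2.1 ^ (-m - 1/2) * br η.2.2 ^ (-m - 1/2) *
          br3 η ^ (1 - δ)) • b η) 2 volume) :
    Integrable b volume ∧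
    (∀ η : ℝ × ℝ × ℝ,
      Integrable (fun ζ : ℝ × ℝ × ℝ =>
        (α₁ (η.1 - ζ.1) * α₂ (η.2.1 - ζ.2.1) * α₃ (η.2.2 - ζ.2.2)) * b ζ) volume) ∧
    (∀ μ₀ μ₁ r : ℝ, 0 < μ₀ → μ₀ < μ₁ → 0 < r → r + 2 / (-m - 1/2) < 1 →
      ∫⁻ η in Upsilon μ₀ μ₁,
        ENNReal.ofReal (br3 η ^ (-6 * m - 3 + r) *
          ‖(∫ ζ : ℝ × ℝ × ℝ,
              (α₁ (η.1 - ζ.1) * α₂ (η.2.1 - ζ.2.1) * α₃ (η.2.2 - ζ.2.2)) * b ζ ∂volume) -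
            (α₁ η.1 * α₂ η.2.1 * α₃ η.2.2) * ∫ ζ : ℝ × ℝ × ℝ, b ζ ∂volume‖ ^ 2)
        ∂volume < ⊤) := by
  obtain ⟨hb₁, hconv, herr⟩ := stmt_6_general (θ := 1 - 1 / 2) (by linarith) (by linarith)
    (by linarith) (by norm_num) (by norm_num) hα₁.isFirstOrderSymbol hα₂.isFirstOrderSymbol
    hα₃.isFirstOrderSymbol (hbw (1 / 2) (by norm_num))
  refine ⟨hb₁, hconv, fun μ₀ μ₁ r hμ₀ _ _ hr => ?_⟩
  have hr₁ : r < 1 := by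
    have : 0 < 2 / (-m - 1 / 2) := div_pos two_pos (by linarith)
    linarith
  rw [show -6 * m - 3 + r = -2 * (m + m + m) - 3 + r by ring]
  exact herr μ₀ μ₁ r hμ₀ (by linarith)
end
end

section
/- Let d ≥ 0, n = 3+d, write y = (y₁,y₂,y₃,y'') ∈ ℝ³ × ℝ^d, and let m < −1. For j = 1,2,3 let a_j : ℝ × ℝ^{n−1} → ℂ be a symbol of order m with smooth parameters, and define the bounded continuous functions v₁(y) = ∫_ℝ e^{i y₁ η} a₁(η, (y₂,y₃,y'')) dη, v₂(y) = ∫_ℝ e^{i y₂ η} a₂(η, (y₁,y₃,y'')) dη, v₃(y) = ∫_ℝ e^{i y₃ η} a₃(η, (y₁,y₂,y'')) dη (absolutely convergent since m < −1), and V(y) = ∫_{ℝ³} e^{i(y₁η₁+y₂η₂+y₃η₃)} a₁(η₁,(0,0,y'')) a₂(η₂,(0,0,y'')) a₃(η₃,(0,0,y'')) dη₁dη₂dη₃. Then for every φ ∈ C_c^∞(ℝⁿ) there are measurable functions e₁, e₂, e₃ on ℝⁿ with 𝓕(φ·(v₁v₂v₃ − V)) = e₁ + e₂ + e₃ such that for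 every δ > 0: W_{−m+1/2, −m−1/2, −m−1/2, δ}·e₁ ∈ L²(ℝⁿ), W_{−m−1/2, −m+1/2, −m−1/2, δ}·e₂ ∈ L²(ℝⁿ), and W_{−m−1/2, −m−1/2, −m+1/2, δ}·e₃ ∈ L²(ℝⁿ). -/
open MeasureTheory
open scoped RealInnerProductSpace

noncomputable section

/-- The parameter space `ℝ^{n-1} = ℝ² × ℝᵈ`. -/
abbrev Par (d : ℕ) : Type := ℝ × ℝ × EuclideanSpace ℝ (Fin d)

/-- A symbol of order `m` with smooth parameters: `a(η, w)` is smooth and every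
mixed derivative `∂_w^α ∂_η^β a` is bounded by `C (1+|η|)^{m-β}`. -/
def IsSymbolP (d : ℕ) (m : ℝ) (a : ℝ × Par d → ℂ) : Prop :=
  ContDiff ℝ (⊤ : ℕ∞) a ∧ ∀ α β : ℕ, ∃ C : ℝ, ∀ (η : ℝ) (w : Par d),
    ‖iteratedFDeriv ℝ α (fun w' => iteratedDeriv β (fun η' => a (η', w')) η) w‖ ≤
      C * (1 + |η|) ^ (m - β)

/-- The Euclidean pairing `⟨y, η⟩` on `ℝⁿ = ℝ³ × ℝᵈ`. -/
def pairing (d : ℕ) (y η : Sp d) : ℝ :=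
  y.1 * η.1 + y.2.1 * η.2.1 + y.2.2.1 * η.2.2.1 + ⟪y.2.2.2, η.2.2.2⟫

/-- The Fourier transform `𝓕u(η) = ∫ e^{-i⟨y,η⟩} u(y) dy`. -/
def FT (d : ℕ) (u : Sp d → ℂ) (η : Sp d) : ℂ :=
  ∫ y : Sp d, Complex.exp (-(Complex.I * (pairing d y η : ℂ))) * u y ∂volume

/-- The conormal wave `v₁(y) = ∫ e^{i y₁ η} a(η, (y₂,y₃,y'')) dη`. -/
def v1 (d : ℕ) (a : ℝ × Par d → ℂ) (y : Sp d) : ℂ :=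
  ∫ η : ℝ, Complex.exp (Complex.I * ((y.1 * η : ℝ) : ℂ)) * a (η, (y.2.1, y.2.2.1, y.2.2.2))

/-- The conormal wave `v₂(y) = ∫ e^{i y₂ η} a(η, (y₁,y₃,y'')) dη`. -/
def v2 (d : ℕ) (a : ℝ × Par d → ℂ) (y : Sp d) : ℂ :=
  ∫ η : ℝ, Complex.exp (Complex.I * ((y.2.1 * η : ℝ) : ℂ)) * a (η, (y.1, y.2.2.1, y.2.2.2))

/-- The conormal wave `v₃(y) = ∫ e^{i y₃ η} a(η, (y₁,y₂,y'')) dη`. -/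
def v3 (d : ℕ) (a : ℝ × Par d → ℂ) (y : Sp d) : ℂ :=
  ∫ η : ℝ, Complex.exp (Complex.I * ((y.2.2.1 * η : ℝ) : ℂ)) * a (η, (y.1, y.2.1, y.2.2.2))

/-- The product-type conormal distribution
`V(y) = ∫_{ℝ³} e^{i(y₁η₁+y₂η₂+y₃η₃)} a₁(η₁,(0,0,y'')) a₂(η₂,(0,0,y'')) a₃(η₃,(0,0,y'')) dη`. -/
def Vt (d : ℕ) (a₁ a₂ a₃ : ℝ × Par d → ℂ) (y : Sp d) : ℂ :=
  ∫ η : ℝ × ℝ × ℝ,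
    Complex.exp (Complex.I * ((y.1 * η.1 + y.2.1 * η.2.1 + y.2.2.1 * η.2.2 : ℝ) : ℂ)) *
      a₁ (η.1, ((0 : ℝ), (0 : ℝ), y.2.2.2)) * a₂ (η.2.1, ((0 : ℝ), (0 : ℝ), y.2.2.2)) *
      a₃ (η.2.2, ((0 : ℝ), (0 : ℝ), y.2.2.2))

/-!
Let `zⱼ` be the wave `vⱼ` with its amplitude frozen at the parameter `(0, 0, y'')`, so that
`V = z₁z₂z₃` by Fubini. Hadamard's lemma in the parameters writes `vⱼ - zⱼ` as a sum of terms
`yₖ` times a wave of the same order, `k ≠ j`, so `v₁v₂v₃ - V` telescopes into products of three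
waves carrying a factor `yₖ`. Integrating by parts in the `k`-th frequency, `yₖ e^{i yₖ η}` lowers
the order of the `k`-th wave by one. The Fourier transform of a localised product of three waves is
a superposition of translates of rapidly decreasing functions, so Peetre's inequality bounds it by
the product of the three symbol sizes with rapid decay in `η''`; the weight `W` then leaves a square
integrable function, the loss `⟨η⟩^{-δ}` being split evenly between the three conormal variables.
-/

/-! ### Families of smooth functions with bounded derivatives -/

/-- A family of smooth functions `f i` all of whose derivatives are bounded, uniformly in the
argument, by constant multiples of the size `g i`; the constants depend only on the order. -/
structure HasDerivBounds {ι E F : Type*} [NormedAddCommGroup E] [NormedSpace ℝ E]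
    [NormedAddCommGroup F] [NormedSpace ℝ F] (f : ι → E → F) (g : ι → ℝ) : Prop where
  contDiff : ∀ i, ContDiff ℝ (⊤ : ℕ∞) (f i)
  bound : ∀ k : ℕ, ∃ C : ℝ, ∀ i x, ‖iteratedFDeriv ℝ k (f i) x‖ ≤ C * g i

section DerivBounds

variable {ι κ E E' F : Type*} [NormedAddCommGroup E] [NormedSpace ℝ E]
  [NormedAddCommGroup E'] [NormedSpace ℝ E'] [NormedAddCommGroup F] [NormedSpace ℝ F]

namespace HasDerivBounds

variable {f : ι → E → F} {g : ι → ℝ}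

theorem norm_le (h : HasDerivBounds f g) : ∃ C : ℝ, ∀ i x, ‖f i x‖ ≤ C * g i := by
  simpa only [norm_iteratedFDeriv_zero] using h.bound 0

theorem comp_index (h : HasDerivBounds f g) (σ : κ → ι) :
    HasDerivBounds (f ∘ σ) (g ∘ σ) :=
  ⟨fun j => h.contDiff (σ j), fun k => (h.bound k).imp fun _ hC j => hC (σ j)⟩

theorem const {φ : E → F} (hφ : ContDiff ℝ (⊤ : ℕ∞) φ) (hφc : HasCompactSupport φ) :
    HasDerivBounds (fun _ : ι => φ) (fun _ => 1) where
  contDiff _ := hφ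
  bound k := by
    obtain ⟨C, hC⟩ := (hφ.continuous_iteratedFDeriv (m := k) (by exact_mod_cast le_top))
      |>.bounded_above_of_compact_support (hφc.iteratedFDeriv k)
    exact ⟨C, fun _ x => by simpa only [mul_one] using hC x⟩

theorem mul {f f' : ι → E → ℂ} {g g' : ι → ℝ} (h : HasDerivBounds f g)
    (h' : HasDerivBounds f' g') :
    HasDerivBounds (fun i x => f i x * f' i x) (fun i => g i * g' i) where
  contDiff i := (h.contDiff i).mul (h'.contDiff i)
  bound k := by
    choose C hC using h.bound
    choose C' hC' using h'.bound
    refine ⟨∑ j ∈ Finset.range (k + 1), (k.choose j : ℝ) * C j * C' (k - j), fun i x => ?_⟩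
    refine (norm_iteratedFDeriv_mul_le (h.contDiff i) (h'.contDiff i) x
      (by exact_mod_cast le_top)).trans ?_
    rw [Finset.sum_mul]
    refine Finset.sum_le_sum fun j _ => ?_
    calc (k.choose j : ℝ) * ‖iteratedFDeriv ℝ j (f i) x‖ * ‖iteratedFDeriv ℝ (k - j) (f' i) x‖
      _ ≤ (k.choose j : ℝ) * (C j * g i) * (C' (k - j) * g' i) := by
          have hfj := hC j i x
          have := (norm_nonneg _).trans hfj
          gcongr
          exact hC' (k - j) i x
      _ = (k.choose j : ℝ) * C j * C' (k - j) * (g i * g' i) := by ring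

theorem comp_clm (h : HasDerivBounds f g) (hg : ∀ i, 0 ≤ g i) {L : ι → E' →L[ℝ] E} {K : ℝ}
    (hL : ∀ i, ‖L i‖ ≤ K) : HasDerivBounds (fun i x => f i (L i x)) g where
  contDiff i := (h.contDiff i).comp (L i).contDiff
  bound k := by
    obtain ⟨C, hC⟩ := h.bound k
    refine ⟨|C| * K ^ k, fun i x => ?_⟩
    have hCi : ‖iteratedFDeriv ℝ k (f i) (L i x)‖ ≤ |C| * g i :=
      (hC i (L i x)).trans (mul_le_mul_of_nonneg_right (le_abs_self C) (hg i))
    calc ‖iteratedFDeriv ℝ k (f i ∘ L i) x‖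
      _ = ‖(iteratedFDeriv ℝ k (f i) (L i x)).compContinuousLinearMap fun _ => L i‖ := by
          rw [(L i).iteratedFDeriv_comp_right (h.contDiff i) x (by exact_mod_cast le_top)]
      _ ≤ ‖iteratedFDeriv ℝ k (f i) (L i x)‖ * ∏ _j : Fin k, ‖L i‖ :=
          ContinuousMultilinearMap.norm_compContinuousLinearMap_le _ _
      _ ≤ |C| * g i * ∏ _j : Fin k, K := by
          have := hg i
          gcongr
          exact hL i
      _ = |C| * K ^ k * g i := by
          rw [Finset.prod_const, Finset.card_univ, Fintype.card_fin]
          ring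

theorem clm_apply_const {A : ι → E → E' →L[ℝ] F} (h : HasDerivBounds A g) (v : E') :
    HasDerivBounds (fun i x => A i x v) g where
  contDiff i := (h.contDiff i).clm_apply contDiff_const
  bound k := by
    obtain ⟨C, hC⟩ := h.bound k
    refine ⟨‖v‖ * C, fun i x => ?_⟩
    calc ‖iteratedFDeriv ℝ k (fun x => A i x v) x‖
      _ ≤ ‖v‖ * ‖iteratedFDeriv ℝ k (A i) x‖ :=
          norm_iteratedFDeriv_clm_apply_const (h.contDiff i).contDiffAt (by exact_mod_cast le_top)
      _ ≤ ‖v‖ * (C * g i) := by gcongr; exact hC i x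
      _ = ‖v‖ * C * g i := (mul_assoc _ _ _).symm

protected theorem fderiv (h : HasDerivBounds f g) : HasDerivBounds (fun i => fderiv ℝ (f i)) g where
  contDiff i := (h.contDiff i).fderiv_right (by simp)
  bound k := by simpa only [norm_iteratedFDeriv_fderiv] using h.bound (k + 1)

theorem const_mul {f : ι → E → ℂ} (h : HasDerivBounds f g) (c : ℂ) :
    HasDerivBounds (fun i x => c * f i x) g where
  contDiff i := contDiff_const.mul (h.contDiff i)
  bound k := by
    obtain ⟨C, hC⟩ := h.bound k
    refine ⟨‖c‖ * C, fun i x => ?_⟩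
    have hfi : ContDiffAt ℝ k (f i) x := (h.contDiff i).contDiffAt.of_le (by exact_mod_cast le_top)
    calc ‖iteratedFDeriv ℝ k (fun x => c • f i x) x‖
      _ = ‖c‖ * ‖iteratedFDeriv ℝ k (f i) x‖ := by
          rw [iteratedFDeriv_const_smul_apply' hfi, norm_smul]
      _ ≤ ‖c‖ * (C * g i) := by gcongr; exact hC i x
      _ = ‖c‖ * C * g i := (mul_assoc _ _ _).symm

end HasDerivBounds

/-! ### Differentiation under an interval integral -/

theorem contDiff_iteratedFDeriv_uncurry {f : E' → E → F}
    (hf : ContDiff ℝ (⊤ : ℕ∞) (fun p : E' × E => f p.1 p.2)) (k : ℕ) :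
    ContDiff ℝ (⊤ : ℕ∞) (fun p : E' × E => iteratedFDeriv ℝ k (f p.1) p.2) := by
  induction k with
  | zero => exact (continuousMultilinearCurryFin0 ℝ E F).symm.contDiff.comp hf
  | succ k ih =>
    refine (continuousMultilinearCurryLeftEquiv ℝ (fun _ : Fin (k + 1) => E) F).symm.contDiff.comp
      (ContDiff.fderiv (f := fun p : E' × E => iteratedFDeriv ℝ k (f p.1)) (g := Prod.snd)
        (n := (⊤ : ℕ∞)) (m := (⊤ : ℕ∞)) ?_ contDiff_snd (by simp))
    exact ih.comp ((contDiff_fst.comp contDiff_fst).prodMk contDiff_snd)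

theorem hasFDerivAt_intervalIntegral_of_contDiff {f : ℝ → E → F} {M : ℝ}
    (hf : ContDiff ℝ (⊤ : ℕ∞) (fun p : ℝ × E => f p.1 p.2))
    (hM : ∀ t ∈ Set.Icc (0 : ℝ) 1, ∀ x, ‖fderiv ℝ (f t) x‖ ≤ M) (x : E) :
    HasFDerivAt (fun x => ∫ t in (0 : ℝ)..1, f t x) (∫ t in (0 : ℝ)..1, fderiv ℝ (f t) x) x := by
  have hcont (x : E) : Continuous fun t => f t x :=
    hf.continuous.comp (continuous_id.prodMk continuous_const)
  have hcont' : Continuous fun t => fderiv ℝ (f t) x :=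
    (ContDiff.fderiv (f := f) (g := fun _ : ℝ => x) (n := 0) (m := 1)
      (hf.of_le (by exact_mod_cast le_top)) contDiff_const (by simp)).continuous
  have hdiff (t : ℝ) : Differentiable ℝ (f t) :=
    (hf.comp (contDiff_const.prodMk contDiff_id)).differentiable (by simp)
  refine intervalIntegral.hasFDerivAt_integral_of_dominated_of_fderiv_le Filter.univ_mem
    (bound := fun _ => M) (.of_forall fun x => (hcont x).aestronglyMeasurable)
    ((hcont x).intervalIntegrable 0 1) hcont'.aestronglyMeasurable
    (.of_forall fun t ht x _ => hM t ?_ x) intervalIntegrable_const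
    (.of_forall fun t _ x _ => (hdiff t x).hasFDerivAt)
  rw [Set.uIoc_of_le zero_le_one] at ht
  exact Set.Ioc_subset_Icc_self ht

theorem hasFDerivAt_intervalIntegral_iteratedFDeriv {f : ℝ → E → F}
    (hf : ContDiff ℝ (⊤ : ℕ∞) (fun p : ℝ × E => f p.1 p.2))
    (hM : ∀ k : ℕ, ∃ M, ∀ t ∈ Set.Icc (0 : ℝ) 1, ∀ x, ‖iteratedFDeriv ℝ k (f t) x‖ ≤ M)
    (k : ℕ) (x : E) :
    HasFDerivAt (fun x => ∫ t in (0 : ℝ)..1, iteratedFDeriv ℝ k (f t) x)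
      (∫ t in (0 : ℝ)..1, fderiv ℝ (iteratedFDeriv ℝ k (f t)) x) x := by
  obtain ⟨M, hM⟩ := hM (k + 1)
  refine hasFDerivAt_intervalIntegral_of_contDiff (M := M)
    (contDiff_iteratedFDeriv_uncurry hf k) (fun t ht x => ?_) x
  rw [norm_fderiv_iteratedFDeriv]
  exact hM t ht x

theorem iteratedFDeriv_intervalIntegral [CompleteSpace F] {f : ℝ → E → F}
    (hf : ContDiff ℝ (⊤ : ℕ∞) (fun p : ℝ × E => f p.1 p.2))
    (hM : ∀ k : ℕ, ∃ M, ∀ t ∈ Set.Icc (0 : ℝ) 1, ∀ x, ‖iteratedFDeriv ℝ k (f t) x‖ ≤ M) (k : ℕ) :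
    iteratedFDeriv ℝ k (fun x => ∫ t in (0 : ℝ)..1, f t x) =
      fun x => ∫ t in (0 : ℝ)..1, iteratedFDeriv ℝ k (f t) x := by
  induction k with
  | zero =>
    ext1 x
    exact ((continuousMultilinearCurryFin0 ℝ E F).symm.toLinearIsometry
      |>.intervalIntegral_comp_comm fun t => f t x).symm
  | succ k ih =>
    ext1 x
    rw [iteratedFDeriv_succ_eq_comp_left, Function.comp_apply, ih,
      (hasFDerivAt_intervalIntegral_iteratedFDeriv hf hM k x).fderiv]
    exact (LinearIsometry.intervalIntegral_comp_comm (𝕜 := ℝ) (F := E [×k + 1]→L[ℝ] F)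
      (continuousMultilinearCurryLeftEquiv ℝ (fun _ : Fin (k + 1) => E) F).symm.toLinearIsometry
      fun t => fderiv ℝ (iteratedFDeriv ℝ k (f t)) x).symm

theorem HasDerivBounds.intervalIntegral [CompleteSpace F] {f : ι → ℝ → E → F} {g : ι → ℝ}
    (hf : ∀ i, ContDiff ℝ (⊤ : ℕ∞) (fun p : ℝ × E => f i p.1 p.2))
    (h : HasDerivBounds (fun p : ι × Set.Icc (0 : ℝ) 1 => f p.1 p.2) (fun p => g p.1)) :
    HasDerivBounds (fun i x => ∫ t in (0 : ℝ)..1, f i t x) g := by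
  have hM (i : ι) (k : ℕ) :
      ∃ M, ∀ t ∈ Set.Icc (0 : ℝ) 1, ∀ x, ‖iteratedFDeriv ℝ k (f i t) x‖ ≤ M :=
    (h.bound k).imp' (· * g i) fun C hC t ht => hC (i, ⟨t, ht⟩)
  refine ⟨fun i => contDiff_of_differentiable_iteratedFDeriv fun k _ => ?_, fun k => ?_⟩
  · rw [iteratedFDeriv_intervalIntegral (hf i) (hM i)]
    exact fun x =>
      (hasFDerivAt_intervalIntegral_iteratedFDeriv (hf i) (hM i) k x).differentiableAt
  · refine (h.bound k).imp fun C hC i x => ?_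
    rw [iteratedFDeriv_intervalIntegral (hf i) (hM i)]
    have hCi (t : ℝ) (ht : t ∈ Set.uIoc (0 : ℝ) 1) : ‖iteratedFDeriv ℝ k (f i t) x‖ ≤ C * g i := by
      rw [Set.uIoc_of_le zero_le_one] at ht
      exact hC (i, ⟨t, Set.Ioc_subset_Icc_self ht⟩) x
    exact (intervalIntegral.norm_integral_le_of_norm_le_const hCi).trans_eq (by simp)

end DerivBounds

/-! ### Amplitudes and the Hadamard lemma -/

section Amplitude

variable {E E' F : Type*} [NormedAddCommGroup E] [NormedSpace ℝ E]
  [NormedAddCommGroup E'] [NormedSpace ℝ E'] [NormedAddCommGroup F] [NormedSpace ℝ F] {m : ℝ}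

/-- An amplitude of order `m`: a jointly continuous function `b η x`, smooth in `x`, all of whose
`x`-derivatives are `O((1 + |η|) ^ m)`. In contrast to a symbol, nothing is asked of its
derivatives in the frequency `η`. -/
structure IsAmplitude (m : ℝ) (b : ℝ → E → F) : Prop where
  continuous : Continuous (fun p : ℝ × E => b p.1 p.2)
  derivBounds : HasDerivBounds b (fun η => (1 + |η|) ^ m)

theorem integrable_one_add_abs_rpow (hm : m < -1) : Integrable (fun η : ℝ => (1 + |η|) ^ m) := by
  simpa using integrable_one_add_norm (E := ℝ) (μ := volume) (r := -m) (by simp; linarith)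

namespace IsAmplitude

theorem comp_clm {b : ℝ → E → F} (hb : IsAmplitude m b) (L : E' →L[ℝ] E) :
    IsAmplitude m (fun η x => b η (L x)) where
  continuous := hb.continuous.comp (continuous_fst.prodMk (L.continuous.comp continuous_snd))
  derivBounds := hb.derivBounds.comp_clm (fun η => by positivity) (fun _ => le_refl ‖L‖)

theorem clm_apply_const {B : ℝ → E → E' →L[ℝ] F} (hB : IsAmplitude m B) (v : E') :
    IsAmplitude m (fun η x => B η x v) where
  continuous := hB.continuous.clm_apply continuous_const
  derivBounds := hB.derivBounds.clm_apply_const v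

theorem const_mul {b : ℝ → E → ℂ} (hb : IsAmplitude m b) (c : ℂ) :
    IsAmplitude m (fun η x => c * b η x) where
  continuous := continuous_const.mul hb.continuous
  derivBounds := hb.derivBounds.const_mul c

theorem integrable {b : ℝ → E → F} (hb : IsAmplitude m b) (hm : m < -1) (x : E) :
    Integrable (fun η => b η x) := by
  obtain ⟨C, hC⟩ := hb.derivBounds.norm_le
  exact ((integrable_one_add_abs_rpow hm).const_mul C).mono'
    (hb.continuous.comp (continuous_id.prodMk continuous_const)).aestronglyMeasurable
    (.of_forall fun η => hC η x)

end IsAmplitude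

variable {a : ℝ × E → F}

theorem contDiff_fderiv_slice (ha : ContDiff ℝ (⊤ : ℕ∞) a) :
    ContDiff ℝ (⊤ : ℕ∞) (fun p : ℝ × E => fderiv ℝ (fun x => a (p.1, x)) p.2) := by
  refine ContDiff.fderiv (m := (⊤ : ℕ∞)) ?_ contDiff_snd (by simp)
  exact ha.comp ((contDiff_fst.comp contDiff_fst).prodMk contDiff_snd)

theorem sub_eq_intervalIntegral_fderiv_segment [CompleteSpace F] (ha : ContDiff ℝ (⊤ : ℕ∞) a)
    (η : ℝ) (x₀ x : E) :
    a (η, x) - a (η, x₀) =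
      (∫ t in (0 : ℝ)..1, fderiv ℝ (fun x' => a (η, x')) (x₀ + t • (x - x₀))) (x - x₀) := by
  have hcont : Continuous fun t : ℝ => fderiv ℝ (fun x' => a (η, x')) (x₀ + t • (x - x₀)) :=
    (contDiff_fderiv_slice ha).continuous.comp
      (by fun_prop : Continuous fun t : ℝ => (η, x₀ + t • (x - x₀)))
  have hderiv (t : ℝ) : HasDerivAt (fun t : ℝ => a (η, x₀ + t • (x - x₀)))
      (fderiv ℝ (fun x' => a (η, x')) (x₀ + t • (x - x₀)) (x - x₀)) t := by
    have hsegment : HasDerivAt (fun t : ℝ => x₀ + t • (x - x₀)) (x - x₀) t := by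
      simpa using ((hasDerivAt_id t).smul_const (x - x₀)).const_add x₀
    have hdiff : Differentiable ℝ fun x' => a (η, x') :=
      (ha.comp (contDiff_const.prodMk contDiff_id)).differentiable (by simp)
    exact (hdiff _).hasFDerivAt.comp_hasDerivAt t hsegment
  rw [ContinuousLinearMap.intervalIntegral_apply (hcont.intervalIntegrable 0 1),
    intervalIntegral.integral_eq_sub_of_hasDerivAt (fun t _ => hderiv t)
      ((hcont.clm_apply continuous_const).intervalIntegrable 0 1)]
  simp

theorem IsAmplitude.exists_sub_eq_clm [CompleteSpace F]
    (hb : IsAmplitude m (fun η x => a (η, x))) (ha : ContDiff ℝ (⊤ : ℕ∞) a) (P : E →L[ℝ] E) :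
    ∃ B : ℝ → E → E →L[ℝ] F, IsAmplitude m B ∧
      ∀ η x, a (η, x) - a (η, P x) = B η x (x - P x) := by
  let L (t : ℝ) : E →L[ℝ] E := P + t • (ContinuousLinearMap.id ℝ E - P)
  have hL (t : Set.Icc (0 : ℝ) 1) : ‖L t‖ ≤ ‖P‖ + ‖ContinuousLinearMap.id ℝ E - P‖ := by
    refine (norm_add_le _ _).trans (add_le_add_right ?_ _)
    rw [norm_smul, Real.norm_of_nonneg t.2.1]
    exact mul_le_of_le_one_left (norm_nonneg _) t.2.2
  refine ⟨fun η x => ∫ t in (0 : ℝ)..1, fderiv ℝ (fun x' => a (η, x')) (L t x), ⟨?_, ?_⟩,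
    fun η x => sub_eq_intervalIntegral_fderiv_segment ha η (P x) x⟩
  · refine intervalIntegral.continuous_parametric_intervalIntegral_of_continuous'
      (f := fun (p : ℝ × E) t => fderiv ℝ (fun x' => a (p.1, x')) (L t p.2)) ?_ 0 1
    exact (contDiff_fderiv_slice ha).continuous.comp (by fun_prop :
      Continuous fun q : (ℝ × E) × ℝ => (q.1.1, P q.1.2 + q.2 • (q.1.2 - P q.1.2)))
  · refine HasDerivBounds.intervalIntegral
      (f := fun η t x => fderiv ℝ (fun x' => a (η, x')) (L t x)) (fun η => ?_) ?_
    · exact (contDiff_fderiv_slice ha).comp (by fun_prop :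
        ContDiff ℝ (⊤ : ℕ∞) fun p : ℝ × E => (η, P p.2 + p.1 • (p.2 - P p.2)))
    · exact (hb.derivBounds.fderiv.comp_index Prod.fst).comp_clm
        (fun p => by simp only [Function.comp_apply]; positivity) (fun p => hL p.2)

end Amplitude

section Symbol

variable {d : ℕ} {m : ℝ} {a : ℝ × Par d → ℂ}

namespace IsSymbolP

theorem isAmplitude_iteratedDeriv (ha : IsSymbolP d m a) (β : ℕ) :
    IsAmplitude (m - β) (fun η w => iteratedDeriv β (fun η' => a (η', w)) η) := by
  have hs : ContDiff ℝ (⊤ : ℕ∞) fun p : ℝ × Par d => iteratedDeriv β (fun η => a (η, p.2)) p.1 := by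
    simp only [iteratedDeriv]
    refine (ContinuousMultilinearMap.apply ℝ (fun _ : Fin β => ℝ) ℂ fun _ => 1).contDiff.comp ?_
    have hswap : ContDiff ℝ (⊤ : ℕ∞) fun p : Par d × ℝ => a (p.2, p.1) :=
      ha.1.comp (contDiff_snd.prodMk contDiff_fst)
    exact (contDiff_iteratedFDeriv_uncurry (f := fun w η => a (η, w)) hswap β).comp
      (contDiff_snd.prodMk contDiff_fst)
  exact ⟨hs.continuous, fun η => hs.comp (contDiff_const.prodMk contDiff_id), fun α => ha.2 α β⟩

end IsSymbolP

end Symbol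

/-! ### Conormal waves -/

/-- The oscillatory integral `∫ e^{ixη} f(η) dη`, the building block of conormal waves. -/
def wave (x : ℝ) (f : ℝ → ℂ) : ℂ := ∫ η : ℝ, Complex.exp (Complex.I * ((x * η : ℝ) : ℂ)) * f η

theorem norm_exp_I_mul_ofReal (x : ℝ) : ‖Complex.exp (Complex.I * (x : ℂ))‖ = 1 := by
  rw [mul_comm, Complex.norm_exp_ofReal_mul_I]

theorem integrable_exp_mul (x : ℝ) {f : ℝ → ℂ} (hf : Integrable f) :
    Integrable (fun η : ℝ => Complex.exp (Complex.I * ((x * η : ℝ) : ℂ)) * f η) :=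
  hf.bdd_mul (c := 1) (by fun_prop) (.of_forall fun η => (norm_exp_I_mul_ofReal _).le)

theorem wave_sub (x : ℝ) {f g : ℝ → ℂ} (hf : Integrable f) (hg : Integrable g) :
    wave x (fun η => f η - g η) = wave x f - wave x g := by
  simp only [wave, mul_sub]
  exact integral_sub (integrable_exp_mul x hf) (integrable_exp_mul x hg)

theorem wave_add (x : ℝ) {f g : ℝ → ℂ} (hf : Integrable f) (hg : Integrable g) :
    wave x (fun η => f η + g η) = wave x f + wave x g := by
  simp only [wave, mul_add]
  exact integral_add (integrable_exp_mul x hf) (integrable_exp_mul x hg)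

theorem wave_const_mul (x : ℝ) (c : ℂ) (f : ℝ → ℂ) :
    wave x (fun η => c * f η) = c * wave x f := by
  simp only [wave, mul_left_comm _ c, integral_const_mul]

theorem wave_eq_fourier (x : ℝ) (f : ℝ → ℂ) :
    wave x f = FourierTransform.fourier f (-x / (2 * Real.pi)) := by
  rw [Real.fourier_real_eq_integral_exp_smul]
  refine integral_congr_ae (.of_forall fun η => ?_)
  simp only [smul_eq_mul]
  congr 2
  push_cast
  field_simp

theorem mul_wave (x : ℝ) {f : ℝ → ℂ} (hf : Integrable f) (hdiff : Differentiable ℝ f)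
    (hf' : Integrable (deriv f)) :
    (x : ℂ) * wave x f = wave x (fun η => Complex.I * deriv f η) := by
  rw [wave_const_mul, wave_eq_fourier, wave_eq_fourier, Real.fourier_deriv hf hdiff hf']
  simp only [smul_eq_mul]
  generalize FourierTransform.fourier f (-x / (2 * Real.pi)) = z
  push_cast
  field_simp
  linear_combination x * z * Complex.I_sq

theorem wave_mul_wave_mul_wave (x y z : ℝ) (f g h : ℝ → ℂ) :
    wave x f * wave y g * wave z h = ∫ θ : ℝ × ℝ × ℝ,
      Complex.exp (Complex.I * ((x * θ.1 + y * θ.2.1 + z * θ.2.2 : ℝ) : ℂ)) *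
        (f θ.1 * g θ.2.1 * h θ.2.2) := by
  simp only [wave]
  rw [mul_assoc, ← integral_prod_mul, ← integral_prod_mul]
  refine integral_congr_ae (.of_forall fun θ => ?_)
  simp only [Complex.ofReal_add, mul_add, Complex.exp_add]
  ring

/-- `u` is conormal of order `m` to the hypersurface `ℓ = 0`: it is the superposition
`u(y) = ∫ e^{i ℓ(y) η} b(η, y) dη` for an amplitude `b` of order `m`. -/
def IsConormal {E : Type*} [NormedAddCommGroup E] [NormedSpace ℝ E] (ℓ : E → ℝ) (m : ℝ)
    (u : E → ℂ) : Prop :=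
  ∃ b : ℝ → E → ℂ, IsAmplitude m b ∧ ∀ y, u y = wave (ℓ y) (fun η => b η y)

/-- The projection `(r, s, w'') ↦ (0, 0, w'')` of the parameter space; `V` samples its amplitudes
on the range of this map. -/
def axisProj (d : ℕ) : Par d →L[ℝ] Par d :=
  .prod 0 (.prod 0 (.comp (.snd ℝ ℝ _) (.snd ℝ ℝ (ℝ × EuclideanSpace ℝ (Fin d)))))

namespace IsSymbolP

variable {E : Type*} [NormedAddCommGroup E] [NormedSpace ℝ E] {d : ℕ} {m : ℝ}
  {a : ℝ × Par d → ℂ} (ℓ : E → ℝ) (p : E →L[ℝ] Par d)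

theorem isAmplitude (ha : IsSymbolP d m a) : IsAmplitude m (fun η w => a (η, w)) := by
  simpa using ha.isAmplitude_iteratedDeriv 0

theorem isConormal_wave (ha : IsSymbolP d m a) :
    IsConormal ℓ m (fun y => wave (ℓ y) (fun η => a (η, p y))) :=
  ⟨_, ha.isAmplitude.comp_clm p, fun _ => rfl⟩

theorem isConormal_mul_wave (ha : IsSymbolP d m a) (hm : m < -1) :
    IsConormal ℓ (m - 1) (fun y => ℓ y * wave (ℓ y) (fun η => a (η, p y))) := by
  have hderiv : IsAmplitude (m - 1) (fun η w => deriv (fun η' => a (η', w)) η) := by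
    simpa using ha.isAmplitude_iteratedDeriv 1
  have hdiff (w : Par d) : Differentiable ℝ fun η => a (η, w) :=
    (ha.1.comp (contDiff_id.prodMk contDiff_const)).differentiable (by simp)
  exact ⟨_, (hderiv.comp_clm p).const_mul Complex.I, fun y => mul_wave (ℓ y)
    (ha.isAmplitude.integrable hm (p y)) (hdiff (p y)) (hderiv.integrable (by linarith) (p y))⟩

theorem exists_isConormal_wave_sub (ha : IsSymbolP d m a) (hm : m < -1) :
    ∃ P Q : E → ℂ, IsConormal ℓ m P ∧ IsConormal ℓ m Q ∧ ∀ y,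
      wave (ℓ y) (fun η => a (η, p y)) - wave (ℓ y) (fun η => a (η, (0, 0, (p y).2.2))) =
        (p y).1 * P y + (p y).2.1 * Q y := by
  obtain ⟨B, hB, hsub⟩ := ha.isAmplitude.exists_sub_eq_clm ha.1 (axisProj d)
  have hB₁ := hB.clm_apply_const (1, 0, 0)
  have hB₂ := hB.clm_apply_const (0, 1, 0)
  refine ⟨_, _, ⟨_, hB₁.comp_clm p, fun _ => rfl⟩, ⟨_, hB₂.comp_clm p, fun _ => rfl⟩, fun y => ?_⟩
  have hsplit : p y - axisProj d (p y) = (p y).1 • (1, 0, 0) + (p y).2.1 • (0, 1, 0) := by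
    simp [axisProj, Prod.ext_iff]
  have ha_int := ha.isAmplitude.integrable hm
  rw [← wave_sub _ (ha_int _) (ha_int _), ← wave_const_mul, ← wave_const_mul,
    ← wave_add _ ((hB₁.integrable hm _).const_mul _) ((hB₂.integrable hm _).const_mul _)]
  congr 1
  ext1 η
  calc a (η, p y) - a (η, axisProj d (p y))
    _ = B η (p y) ((p y).1 • (1, 0, 0) + (p y).2.1 • (0, 1, 0)) := by rw [hsub, hsplit]
    _ = _ := by simp only [map_add, map_smul, Complex.real_smul]

end IsSymbolP

/-! ### The Fourier transform -/

instance isAddHaarMeasure_volume_sp (d : ℕ) : (volume : Measure (Sp d)).IsAddHaarMeasure := by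
  have : (volume : Measure (ℝ × EuclideanSpace ℝ (Fin d))).IsAddHaarMeasure :=
    Measure.prod.instIsAddHaarMeasure _ _
  have : (volume : Measure (ℝ × ℝ × EuclideanSpace ℝ (Fin d))).IsAddHaarMeasure :=
    Measure.prod.instIsAddHaarMeasure _ _
  exact Measure.prod.instIsAddHaarMeasure _ _

section Fourier

variable {d : ℕ}

theorem continuous_pairing : Continuous fun p : Sp d × Sp d => pairing d p.1 p.2 := by
  unfold pairing
  fun_prop

/-- The Euclidean pairing divided by `2π`, as a bounded bilinear map: the normalisation for which
`FT` is a `VectorFourier.fourierIntegral`. -/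
def normalizedPairing (d : ℕ) : Sp d →L[ℝ] Sp d →L[ℝ] ℝ :=
  (LinearMap.mk₂ ℝ (fun y η : Sp d => (2 * Real.pi)⁻¹ * pairing d y η)
    (by intros; simp [pairing, inner_add_left]; ring)
    (by intros; simp [pairing, inner_smul_left]; ring)
    (by intros; simp [pairing, inner_add_right]; ring)
    (by intros; simp [pairing, inner_smul_right]; ring)).toContinuousBilinearMap

theorem normalizedPairing_apply (y η : Sp d) :
    normalizedPairing d y η = (2 * Real.pi)⁻¹ * pairing d y η := rfl

theorem FT_eq_fourierIntegral (f : Sp d → ℂ) : FT d f =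
    VectorFourier.fourierIntegral Real.fourierChar volume
      (normalizedPairing d).toLinearMap₁₂ f := by
  ext1 η
  refine integral_congr_ae (.of_forall fun y => ?_)
  change _ = Real.fourierChar (-normalizedPairing d y η) • f y
  rw [Circle.smul_def, Real.fourierChar_apply, smul_eq_mul, normalizedPairing_apply]
  push_cast
  have : (Real.pi : ℂ) ≠ 0 := mod_cast Real.pi_ne_zero
  field_simp

theorem continuous_normalizedPairing :
    Continuous fun p : Sp d × Sp d => (normalizedPairing d).toLinearMap₁₂ p.1 p.2 := by
  change Continuous fun p : Sp d × Sp d => normalizedPairing d p.1 p.2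
  fun_prop

theorem continuous_FT {f : Sp d → ℂ} (hf : Integrable f) : Continuous (FT d f) := by
  rw [FT_eq_fourierIntegral]
  exact VectorFourier.fourierIntegral_continuous Real.continuous_fourierChar
    continuous_normalizedPairing hf

theorem FT_add {f g : Sp d → ℂ} (hf : Integrable f) (hg : Integrable g) :
    FT d (fun y => f y + g y) = fun ξ => FT d f ξ + FT d g ξ := by
  simp only [FT_eq_fourierIntegral]
  exact VectorFourier.fourierIntegral_add Real.continuous_fourierChar
    continuous_normalizedPairing hf hg

theorem sq_norm_le_pairing_self (ζ : Sp d) : ‖ζ‖ ^ 2 ≤ pairing d ζ ζ := by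
  obtain ⟨x, y, z, w⟩ := ζ
  have hpairing : pairing d (x, y, z, w) (x, y, z, w) = x ^ 2 + y ^ 2 + z ^ 2 + ‖w‖ ^ 2 := by
    simp only [pairing, real_inner_self_eq_norm_sq]
    ring
  have hnorm : ‖(x, y, z, w)‖ ≤ √(x ^ 2 + y ^ 2 + z ^ 2 + ‖w‖ ^ 2) := by
    refine max_le ?_ (max_le ?_ (max_le ?_ ?_)) <;> refine Real.le_sqrt_of_sq_le ?_ <;>
    simp only [Real.norm_eq_abs, sq_abs] <;>
    linarith [sq_nonneg x, sq_nonneg y, sq_nonneg z, sq_nonneg ‖w‖]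
  rw [hpairing]
  exact (Real.le_sqrt (norm_nonneg _) (by positivity)).mp hnorm

-- On the diagonal `(ζ, …, ζ)`, the transform of `Dⁿf` at `ζ` is `(i⟨ζ, ζ⟩)ⁿ` times that of `f`.
theorem norm_pow_mul_norm_FT_le {f : Sp d → ℂ} (hf : ContDiff ℝ (⊤ : ℕ∞) f)
    (hint : ∀ k : ℕ, Integrable (iteratedFDeriv ℝ k f)) (n : ℕ) (ζ : Sp d) :
    ‖ζ‖ ^ n * ‖FT d f ζ‖ ≤ ∫ y, ‖iteratedFDeriv ℝ n f y‖ := by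
  have hFT := VectorFourier.fourierIntegral_iteratedFDeriv (N := (⊤ : ℕ∞)) (normalizedPairing d) hf
    (fun k _ => hint k) (n := n) (by exact_mod_cast le_top)
  have hval := congrArg (fun A => ‖A fun _ : Fin n => ζ‖) (congrFun hFT ζ)
  have hpairing : 0 ≤ pairing d ζ ζ := (sq_nonneg _).trans (sq_norm_le_pairing_self ζ)
  have hmul : ‖ζ‖ ^ n * (‖ζ‖ ^ n * ‖FT d f ζ‖) ≤
      ‖ζ‖ ^ n * ∫ y, ‖iteratedFDeriv ℝ n f y‖ :=
    calc ‖ζ‖ ^ n * (‖ζ‖ ^ n * ‖FT d f ζ‖)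
      _ = (‖ζ‖ ^ 2) ^ n * ‖FT d f ζ‖ := by ring
      _ ≤ pairing d ζ ζ ^ n * ‖FT d f ζ‖ := by gcongr; exact sq_norm_le_pairing_self ζ
      _ = ‖VectorFourier.fourierIntegral Real.fourierChar volume
            (normalizedPairing d).toLinearMap₁₂ (iteratedFDeriv ℝ n f) ζ fun _ => ζ‖ := by
          rw [hval, VectorFourier.fourierPowSMulRight_apply, ← FT_eq_fourierIntegral]
          simp [normalizedPairing_apply, abs_of_nonneg hpairing, abs_of_pos Real.pi_pos,
            ← mul_assoc, ← mul_pow]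
      _ ≤ ‖VectorFourier.fourierIntegral Real.fourierChar volume
            (normalizedPairing d).toLinearMap₁₂ (iteratedFDeriv ℝ n f) ζ‖ * ‖ζ‖ ^ n := by
          simpa using ContinuousMultilinearMap.le_opNorm (VectorFourier.fourierIntegral
            Real.fourierChar volume (normalizedPairing d).toLinearMap₁₂ (iteratedFDeriv ℝ n f) ζ)
            fun _ => ζ
      _ ≤ ‖ζ‖ ^ n * ∫ y, ‖iteratedFDeriv ℝ n f y‖ := by
          rw [mul_comm]
          gcongr
          exact VectorFourier.norm_fourierIntegral_le_integral_norm _ _ _ _ _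
  rcases (pow_nonneg (norm_nonneg ζ) n).eq_or_lt with hζ | hζ
  · rw [← hζ, zero_mul]
    exact integral_nonneg fun _ => norm_nonneg _
  · exact le_of_mul_le_mul_left hmul hζ

theorem HasDerivBounds.exists_norm_FT_le {ι : Type*} {f : ι → Sp d → ℂ} {g : ι → ℝ}
    (h : HasDerivBounds f g) {K : Set (Sp d)} (hK : IsCompact K)
    (hf : ∀ i, tsupport (f i) ⊆ K) (n : ℕ) :
    ∃ C, ∀ i ζ, (1 + ‖ζ‖) ^ n * ‖FT d (f i) ζ‖ ≤ C * g i := by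
  choose C hC using h.bound
  have hderiv_supp (i k) : HasCompactSupport (iteratedFDeriv ℝ k (f i)) :=
    HasCompactSupport.iteratedFDeriv (hK.of_isClosed_subset (isClosed_tsupport _) (hf i)) k
  have hint (i k) : Integrable (iteratedFDeriv ℝ k (f i)) :=
    ((h.contDiff i).continuous_iteratedFDeriv
      (by exact_mod_cast le_top)).integrable_of_hasCompactSupport (hderiv_supp i k)
  have hL1 (i k) : ∫ y, ‖iteratedFDeriv ℝ k (f i) y‖ ≤ volume.real K * C k * g i := by
    have hzero : ∀ y ∉ K, ‖iteratedFDeriv ℝ k (f i) y‖ = 0 := fun y hy => by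
      rw [norm_eq_zero]
      exact Function.notMem_support.mp fun hy' =>
        hy (hf i (support_iteratedFDeriv_subset k hy'))
    rw [← setIntegral_eq_integral_of_forall_compl_eq_zero hzero]
    refine (setIntegral_mono_on (hint i k).norm.integrableOn (integrableOn_const hK.measure_ne_top)
      hK.measurableSet fun y _ => hC k i y).trans_eq ?_
    rw [setIntegral_const, smul_eq_mul, mul_assoc]
  have hdecay (i ζ k) := (norm_pow_mul_norm_FT_le (h.contDiff i) (hint i) k ζ).trans (hL1 i k)
  refine ⟨2 ^ (n - 1) * (volume.real K * C 0 + volume.real K * C n), fun i ζ => ?_⟩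
  calc (1 + ‖ζ‖) ^ n * ‖FT d (f i) ζ‖
    _ ≤ 2 ^ (n - 1) * (1 ^ n + ‖ζ‖ ^ n) * ‖FT d (f i) ζ‖ := by
        gcongr
        exact add_pow_le zero_le_one (norm_nonneg ζ) n
    _ = 2 ^ (n - 1) * (‖ζ‖ ^ 0 * ‖FT d (f i) ζ‖ + ‖ζ‖ ^ n * ‖FT d (f i) ζ‖) := by ring
    _ ≤ 2 ^ (n - 1) * (volume.real K * C 0 * g i + volume.real K * C n * g i) := by
        have h_add := add_le_add (hdecay i ζ 0) (hdecay i ζ n)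
        gcongr
    _ = _ := by ring

end Fourier

/-! ### Superpositions of oscillations -/

section Superposition

variable {d : ℕ} {Θ : Type*} [MeasurableSpace Θ] {μ : Measure Θ}
  {s : Θ → Sp d} {c : Θ → Sp d → ℂ}

theorem integrable_exp_pairing_mul (hs : Measurable s)
    (hc : Integrable (fun q : Sp d × Θ => c q.2 q.1) (volume.prod μ)) :
    Integrable (fun q : Sp d × Θ =>
      Complex.exp (Complex.I * (pairing d q.1 (s q.2) : ℂ)) * c q.2 q.1) (volume.prod μ) := by
  have hphase : Measurable fun q : Sp d × Θ => pairing d q.1 (s q.2) :=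
    continuous_pairing.measurable.comp (measurable_fst.prodMk (hs.comp measurable_snd))
  exact hc.bdd_mul (c := 1) (hphase.complex_ofReal.const_mul _).cexp.aestronglyMeasurable
    (.of_forall fun _ => (norm_exp_I_mul_ofReal _).le)

variable [SFinite μ]

theorem integrable_integral_exp_pairing_mul (hs : Measurable s)
    (hc : Integrable (fun q : Sp d × Θ => c q.2 q.1) (volume.prod μ)) :
    Integrable fun y => ∫ θ, Complex.exp (Complex.I * (pairing d y (s θ) : ℂ)) * c θ y ∂μ :=
  (integrable_exp_pairing_mul hs hc).integral_prod_left

theorem FT_integral_exp_pairing_mul (hs : Measurable s)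
    (hc : Integrable (fun q : Sp d × Θ => c q.2 q.1) (volume.prod μ)) (ξ : Sp d) :
    FT d (fun y => ∫ θ, Complex.exp (Complex.I * (pairing d y (s θ) : ℂ)) * c θ y ∂μ) ξ =
      ∫ θ, FT d (c θ) (ξ - s θ) ∂μ := by
  have hexp (y : Sp d) (θ : Θ) : Complex.exp (-(Complex.I * (pairing d y ξ : ℂ))) *
      (Complex.exp (Complex.I * (pairing d y (s θ) : ℂ)) * c θ y) =
      Complex.exp (Complex.I * (pairing d y (s θ - ξ) : ℂ)) * c θ y := by
    rw [← mul_assoc, ← Complex.exp_add]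
    congr 2
    simp only [pairing, Prod.fst_sub, Prod.snd_sub, inner_sub_right]
    push_cast
    ring
  have hneg (y : Sp d) (θ : Θ) : pairing d y (s θ - ξ) = -pairing d y (ξ - s θ) := by
    simp only [pairing, Prod.fst_sub, Prod.snd_sub, inner_sub_right]
    ring
  simp only [FT, ← integral_const_mul, hexp]
  rw [integral_integral_swap (integrable_exp_pairing_mul (hs.sub_const ξ) hc)]
  simp only [hneg, Complex.ofReal_neg, mul_neg]

end Superposition

/-! ### Product-type conormal distributions -/

/-- The size `(1 + |θ₁|) ^ m₁ (1 + |θ₂|) ^ m₂ (1 + |θ₃|) ^ m₃` of a product of three amplitudes. -/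
def prodWeight (m₁ m₂ m₃ : ℝ) (θ : ℝ × ℝ × ℝ) : ℝ :=
  (1 + |θ.1|) ^ m₁ * ((1 + |θ.2.1|) ^ m₂ * (1 + |θ.2.2|) ^ m₃)

instance isAddHaarMeasure_volume_real_triple :
    (volume : Measure (ℝ × ℝ × ℝ)).IsAddHaarMeasure :=
  Measure.prod.instIsAddHaarMeasure _ _

section ProdWeight

variable {m m₁ m₂ m₃ : ℝ}

theorem prodWeight_nonneg (m₁ m₂ m₃ : ℝ) (θ : ℝ × ℝ × ℝ) : 0 ≤ prodWeight m₁ m₂ m₃ θ := by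
  unfold prodWeight
  positivity

theorem integrable_prodWeight (h₁ : m₁ < -1) (h₂ : m₂ < -1) (h₃ : m₃ < -1) :
    Integrable (prodWeight m₁ m₂ m₃) :=
  (integrable_one_add_abs_rpow h₁).mul_prod
    ((integrable_one_add_abs_rpow h₂).mul_prod (integrable_one_add_abs_rpow h₃))

theorem peetre_rpow_le (hm : m ≤ 0) (x t : ℝ) :
    (1 + |t|) ^ m ≤ (1 + |x|) ^ m * (1 + |x - t|) ^ (-m) := by
  have hx : 1 + |x| ≤ (1 + |t|) * (1 + |x - t|) := by
    have : |x| ≤ |t| + |x - t| := by simpa using abs_add_le t (x - t)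
    nlinarith [abs_nonneg t, abs_nonneg (x - t)]
  have hpow : (1 + |t|) ^ m * (1 + |x - t|) ^ m ≤ (1 + |x|) ^ m := by
    rw [← Real.mul_rpow (by positivity) (by positivity)]
    exact Real.rpow_le_rpow_of_nonpos (by positivity) hx hm
  rwa [Real.rpow_neg (by positivity), ← div_eq_mul_inv, le_div_iff₀ (by positivity)]

theorem one_add_abs_rpow_le_s7 (hm : m ≤ 0) {x t S : ℝ} (hS : |x - t| ≤ S) :
    (1 + |t|) ^ m ≤ (1 + |x|) ^ m * (1 + |x - t|) ^ (-2 : ℝ) * (1 + S) ^ (2 - m) :=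
  calc (1 + |t|) ^ m
    _ ≤ (1 + |x|) ^ m * (1 + |x - t|) ^ (-m) := peetre_rpow_le hm x t
    _ = (1 + |x|) ^ m * (1 + |x - t|) ^ (-2 : ℝ) * (1 + |x - t|) ^ (2 - m) := by
        rw [mul_assoc, ← Real.rpow_add (by positivity)]
        ring_nf
    _ ≤ _ := by gcongr; linarith

theorem prodWeight_le (h₁ : m₁ ≤ 0) (h₂ : m₂ ≤ 0) (h₃ : m₃ ≤ 0) {x θ : ℝ × ℝ × ℝ} {S : ℝ}
    (hS : ‖x - θ‖ ≤ S) : prodWeight m₁ m₂ m₃ θ ≤ prodWeight m₁ m₂ m₃ x *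
      prodWeight (-2) (-2) (-2) (x - θ) * (1 + S) ^ (6 - m₁ - m₂ - m₃) := by
  have hS₀ : 0 < 1 + S := by linarith [norm_nonneg (x - θ)]
  have hS₁ := one_add_abs_rpow_le_s7 h₁ ((norm_fst_le (x - θ)).trans hS)
  have hS₂ := one_add_abs_rpow_le_s7 h₂ ((norm_fst_le _).trans ((norm_snd_le (x - θ)).trans hS))
  have hS₃ := one_add_abs_rpow_le_s7 h₃ ((norm_snd_le _).trans ((norm_snd_le (x - θ)).trans hS))
  have hexp : (1 + S) ^ (6 - m₁ - m₂ - m₃) =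
      (1 + S) ^ (2 - m₁) * ((1 + S) ^ (2 - m₂) * (1 + S) ^ (2 - m₃)) := by
    rw [← Real.rpow_add hS₀, ← Real.rpow_add hS₀]
    ring_nf
  calc prodWeight m₁ m₂ m₃ θ
    _ ≤ _ := mul_le_mul hS₁ (mul_le_mul hS₂ hS₃ (by positivity) (by positivity))
        (by positivity) (by positivity)
    _ = _ := by
        simp only [prodWeight, hexp, Prod.fst_sub, Prod.snd_sub]
        ring

end ProdWeight

/-- Distributions product-type conormal to the coordinate hypersurfaces `y₁ = 0`, `y₂ = 0`,
`y₃ = 0` of orders `m₁`, `m₂`, `m₃`, characterised through the decay of the Fourier transform: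
of the given orders in the conormal variables `ξ₁`, `ξ₂`, `ξ₃` and rapid in `ξ''`. -/
structure IsProductConormal (d : ℕ) (m₁ m₂ m₃ : ℝ) (u : Sp d → ℂ) : Prop where
  integrable : Integrable u
  decay : ∀ N : ℕ, ∃ C : ℝ, ∀ ξ : Sp d, ‖FT d u ξ‖ ≤
    C * (prodWeight m₁ m₂ m₃ (ξ.1, ξ.2.1, ξ.2.2.1) * (1 + ‖ξ.2.2.2‖) ^ (-(N : ℝ)))

section ProductConormal

variable {d : ℕ} {m₁ m₂ m₃ : ℝ}

theorem IsProductConormal.add {u v : Sp d → ℂ} (hu : IsProductConormal d m₁ m₂ m₃ u)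
    (hv : IsProductConormal d m₁ m₂ m₃ v) : IsProductConormal d m₁ m₂ m₃ (fun y => u y + v y) where
  integrable := hu.integrable.add hv.integrable
  decay N := by
    obtain ⟨C, hC⟩ := hu.decay N
    obtain ⟨C', hC'⟩ := hv.decay N
    refine ⟨C + C', fun ξ => ?_⟩
    rw [FT_add hu.integrable hv.integrable, add_mul]
    exact norm_add_le_of_le (hC ξ) (hC' ξ)

theorem prodWeight_le_mul_norm_sub_pow (h₁ : m₁ ≤ 0) (h₂ : m₂ ≤ 0) (h₃ : m₃ ≤ 0) {N n : ℕ}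
    (hn : 6 - m₁ - m₂ - m₃ + N ≤ n) (θ : ℝ × ℝ × ℝ) (ξ : Sp d) :
    prodWeight m₁ m₂ m₃ θ ≤
      prodWeight m₁ m₂ m₃ (ξ.1, ξ.2.1, ξ.2.2.1) * (1 + ‖ξ.2.2.2‖) ^ (-(N : ℝ)) *
        prodWeight (-2) (-2) (-2) ((ξ.1, ξ.2.1, ξ.2.2.1) - θ) *
        (1 + ‖ξ - (θ.1, θ.2.1, θ.2.2, 0)‖) ^ n := by
  set S := ‖ξ - (θ.1, θ.2.1, θ.2.2, 0)‖
  set x : ℝ × ℝ × ℝ := (ξ.1, ξ.2.1, ξ.2.2.1)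
  have hS : S = max ‖ξ.1 - θ.1‖ (max ‖ξ.2.1 - θ.2.1‖ (max ‖ξ.2.2.1 - θ.2.2‖ ‖ξ.2.2.2 - 0‖)) := rfl
  have hx : ‖x - θ‖ ≤ S := by
    rw [hS]
    exact max_le_max le_rfl (max_le_max le_rfl (le_max_left _ _))
  have hξ : ‖ξ.2.2.2‖ ≤ S := by simp [hS]
  have hS₀ : 0 ≤ S := norm_nonneg _
  have := prodWeight_nonneg m₁ m₂ m₃ x
  have := prodWeight_nonneg (-2) (-2) (-2) (x - θ)
  have hN : 1 ≤ (1 + ‖ξ.2.2.2‖) ^ (-(N : ℝ)) * (1 + S) ^ (N : ℝ) := by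
    rw [Real.rpow_neg (by positivity), ← div_eq_inv_mul, one_le_div (by positivity)]
    gcongr
  calc prodWeight m₁ m₂ m₃ θ
    _ ≤ prodWeight m₁ m₂ m₃ x * prodWeight (-2) (-2) (-2) (x - θ) *
          (1 + S) ^ (6 - m₁ - m₂ - m₃) := prodWeight_le h₁ h₂ h₃ hx
    _ ≤ prodWeight m₁ m₂ m₃ x * prodWeight (-2) (-2) (-2) (x - θ) *
          (1 + S) ^ (6 - m₁ - m₂ - m₃) * ((1 + ‖ξ.2.2.2‖) ^ (-(N : ℝ)) * (1 + S) ^ (N : ℝ)) :=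
        le_mul_of_one_le_right (by positivity) hN
    _ = prodWeight m₁ m₂ m₃ x * (1 + ‖ξ.2.2.2‖) ^ (-(N : ℝ)) *
          prodWeight (-2) (-2) (-2) (x - θ) * (1 + S) ^ (6 - m₁ - m₂ - m₃ + N) := by
        rw [Real.rpow_add (by positivity)]
        ring
    _ ≤ _ := by
        rw [← Real.rpow_natCast _ n]
        gcongr
        linarith

theorem exists_norm_integral_FT_sub_le (h₁ : m₁ ≤ 0) (h₂ : m₂ ≤ 0) (h₃ : m₃ ≤ 0)
    {c : ℝ × ℝ × ℝ → Sp d → ℂ} (hc : HasDerivBounds c (prodWeight m₁ m₂ m₃)) {K : Set (Sp d)}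
    (hK : IsCompact K) (hcK : ∀ θ, tsupport (c θ) ⊆ K) (N : ℕ) :
    ∃ C : ℝ, ∀ ξ : Sp d, ‖∫ θ, FT d (c θ) (ξ - (θ.1, θ.2.1, θ.2.2, 0))‖ ≤
      C * (prodWeight m₁ m₂ m₃ (ξ.1, ξ.2.1, ξ.2.2.1) * (1 + ‖ξ.2.2.2‖) ^ (-(N : ℝ))) := by
  obtain ⟨n, hn⟩ := exists_nat_ge (6 - m₁ - m₂ - m₃ + N)
  obtain ⟨C, hC⟩ := hc.exists_norm_FT_le hK hcK n
  let J : ℝ × ℝ × ℝ → ℝ := prodWeight (-2) (-2) (-2)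
  have hJ : Integrable J := integrable_prodWeight (by simp) (by simp) (by simp)
  refine ⟨|C| * ∫ θ, J θ, fun ξ => ?_⟩
  set x : ℝ × ℝ × ℝ := (ξ.1, ξ.2.1, ξ.2.2.1)
  set R := prodWeight m₁ m₂ m₃ x * (1 + ‖ξ.2.2.2‖) ^ (-(N : ℝ))
  have hpoint (θ : ℝ × ℝ × ℝ) :
      ‖FT d (c θ) (ξ - (θ.1, θ.2.1, θ.2.2, 0))‖ ≤ |C| * R * J (x - θ) := by
    set T := (1 + ‖ξ - (θ.1, θ.2.1, θ.2.2, 0)‖) ^ n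
    have hT : 0 < T := by positivity
    refine le_of_mul_le_mul_left ?_ hT
    calc T * ‖FT d (c θ) (ξ - (θ.1, θ.2.1, θ.2.2, 0))‖
      _ ≤ C * prodWeight m₁ m₂ m₃ θ := hC θ _
      _ ≤ |C| * prodWeight m₁ m₂ m₃ θ :=
          mul_le_mul_of_nonneg_right (le_abs_self C) (prodWeight_nonneg _ _ _ θ)
      _ ≤ |C| * (R * J (x - θ) * T) := by
          gcongr
          exact prodWeight_le_mul_norm_sub_pow h₁ h₂ h₃ hn θ ξ
      _ = T * (|C| * R * J (x - θ)) := by ring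
  calc ‖∫ θ, FT d (c θ) (ξ - (θ.1, θ.2.1, θ.2.2, 0))‖
    _ ≤ ∫ θ, |C| * R * J (x - θ) :=
        norm_integral_le_of_norm_le ((hJ.comp_sub_left x).const_mul _) (.of_forall hpoint)
    _ = |C| * (∫ θ, J θ) * R := by
        rw [integral_const_mul, integral_sub_left_eq_self J volume x]
        ring

theorem isProductConormal_integral (h₁ : m₁ < -1) (h₂ : m₂ < -1) (h₃ : m₃ < -1)
    {c : ℝ × ℝ × ℝ → Sp d → ℂ} (hcont : Continuous fun q : Sp d × (ℝ × ℝ × ℝ) => c q.2 q.1)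
    (hc : HasDerivBounds c (prodWeight m₁ m₂ m₃)) {K : Set (Sp d)}
    (hK : IsCompact K) (hcK : ∀ θ, tsupport (c θ) ⊆ K) :
    IsProductConormal d m₁ m₂ m₃ (fun y => ∫ θ : ℝ × ℝ × ℝ,
      Complex.exp (Complex.I * (pairing d y (θ.1, θ.2.1, θ.2.2, 0) : ℂ)) * c θ y) := by
  have hs : Measurable fun θ : ℝ × ℝ × ℝ =>
      (θ.1, θ.2.1, θ.2.2, (0 : EuclideanSpace ℝ (Fin d))) := by
    fun_prop
  obtain ⟨C, hC⟩ := hc.norm_le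
  have hint : Integrable (fun q : Sp d × (ℝ × ℝ × ℝ) => c q.2 q.1) := by
    refine Integrable.mono' (g := fun q => K.indicator 1 q.1 * (C * prodWeight m₁ m₂ m₃ q.2)) ?_
      hcont.aestronglyMeasurable (.of_forall fun ⟨y, θ⟩ => ?_)
    · exact ((integrable_indicator_iff hK.measurableSet).mpr
        (integrableOn_const hK.measure_ne_top)).mul_prod
        ((integrable_prodWeight h₁ h₂ h₃).const_mul C)
    · by_cases hy : y ∈ K
      · simpa [hy] using hC θ y
      · simp [hy, image_eq_zero_of_notMem_tsupport fun hy' => hy (hcK θ hy')]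
  refine ⟨integrable_integral_exp_pairing_mul hs hint, fun N => ?_⟩
  simp only [FT_integral_exp_pairing_mul hs hint]
  exact exists_norm_integral_FT_sub_le (by linarith) (by linarith) (by linarith) hc hK hcK N

theorem IsConormal.isProductConormal_mul {u₁ u₂ u₃ φ : Sp d → ℂ} (h₁ : m₁ < -1) (h₂ : m₂ < -1)
    (h₃ : m₃ < -1) (hu₁ : IsConormal (fun y : Sp d => y.1) m₁ u₁)
    (hu₂ : IsConormal (fun y : Sp d => y.2.1) m₂ u₂)
    (hu₃ : IsConormal (fun y : Sp d => y.2.2.1) m₃ u₃)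
    (hφ : ContDiff ℝ (⊤ : ℕ∞) φ) (hφc : HasCompactSupport φ) :
    IsProductConormal d m₁ m₂ m₃ (fun y => φ y * (u₁ y * u₂ y * u₃ y)) := by
  obtain ⟨b₁, hb₁, hu₁⟩ := hu₁
  obtain ⟨b₂, hb₂, hu₂⟩ := hu₂
  obtain ⟨b₃, hb₃, hu₃⟩ := hu₃
  let c (θ : ℝ × ℝ × ℝ) (y : Sp d) : ℂ := φ y * (b₁ θ.1 y * (b₂ θ.2.1 y * b₃ θ.2.2 y))
  have hcont : Continuous fun q : Sp d × (ℝ × ℝ × ℝ) => c q.2 q.1 := by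
    have hc₁ := hb₁.continuous.comp (by fun_prop : Continuous fun q : Sp d × (ℝ × ℝ × ℝ) =>
      (q.2.1, q.1))
    have hc₂ := hb₂.continuous.comp (by fun_prop : Continuous fun q : Sp d × (ℝ × ℝ × ℝ) =>
      (q.2.2.1, q.1))
    have hc₃ := hb₃.continuous.comp (by fun_prop : Continuous fun q : Sp d × (ℝ × ℝ × ℝ) =>
      (q.2.2.2, q.1))
    exact (hφ.continuous.comp continuous_fst).mul (hc₁.mul (hc₂.mul hc₃))
  have hc : HasDerivBounds c (prodWeight m₁ m₂ m₃) := by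
    have h := (HasDerivBounds.const (ι := ℝ × ℝ × ℝ) hφ hφc).mul
      ((hb₁.derivBounds.comp_index Prod.fst).mul
        ((hb₂.derivBounds.comp_index (Prod.fst ∘ Prod.snd)).mul
          (hb₃.derivBounds.comp_index (Prod.snd ∘ Prod.snd))))
    simp only [one_mul] at h
    exact h
  convert isProductConormal_integral h₁ h₂ h₃ hcont hc hφc
    (fun θ => closure_mono (Function.support_mul_subset_left _ _)) using 2 with y
  rw [hu₁, hu₂, hu₃, wave_mul_wave_mul_wave, ← integral_const_mul]
  refine integral_congr_ae (.of_forall fun θ => ?_)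
  simp only [c, pairing, inner_zero_right, add_zero]
  ring

end ProductConormal

/-! ### Weighted square integrability -/

section Weight

variable {d : ℕ} {m₁ m₂ m₃ k₁ k₂ k₃ δ : ℝ}

theorem prodWeight_mul (k₁ k₂ k₃ m₁ m₂ m₃ : ℝ) (θ : ℝ × ℝ × ℝ) :
    prodWeight k₁ k₂ k₃ θ * prodWeight m₁ m₂ m₃ θ = prodWeight (k₁ + m₁) (k₂ + m₂) (k₃ + m₃) θ := by
  have hadd (t k m : ℝ) : (1 + |t|) ^ (k + m) = (1 + |t|) ^ k * (1 + |t|) ^ m :=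
    Real.rpow_add (by positivity) k m
  simp only [prodWeight, hadd]
  ring

theorem sq_add_sq_rpow_le {k x w : ℝ} (hk : 0 ≤ k) (hw : 0 ≤ w) :
    (1 + x ^ 2 + w ^ 2) ^ (k / 2) ≤ (1 + |x|) ^ k * (1 + w) ^ k := by
  have hle : 1 + x ^ 2 + w ^ 2 ≤ ((1 + |x|) * (1 + w)) ^ 2 := by
    rw [← sq_abs x]
    have := abs_nonneg x
    have : 0 ≤ 2 * |x| + 2 * w + |x| * w * (4 + 2 * |x| + 2 * w + |x| * w) := by positivity
    linear_combination this
  calc (1 + x ^ 2 + w ^ 2) ^ (k / 2)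
    _ ≤ (((1 + |x|) * (1 + w)) ^ 2) ^ (k / 2) := by gcongr
    _ = ((1 + |x|) * (1 + w)) ^ k := by
        rw [← Real.rpow_two, ← Real.rpow_mul (by positivity), mul_div_cancel₀ k two_ne_zero]
    _ = (1 + |x|) ^ k * (1 + w) ^ k := Real.mul_rpow (by positivity) (by positivity)

theorem rpow_le_one_add_abs_rpow (hδ : 0 < δ) {x q : ℝ} (hq : 1 + x ^ 2 ≤ q) :
    q ^ (-δ / 2) ≤ 2 ^ (δ / 2) * (1 + |x|) ^ (-δ) := by
  rw [← Real.norm_eq_abs]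
  refine le_trans ?_ (rpow_neg_one_add_norm_sq_le x hδ)
  rw [Real.norm_eq_abs, sq_abs]
  exact Real.rpow_le_rpow_of_nonpos (by positivity) hq (by linarith)

theorem rpow_le_prodWeight (hδ : 0 < δ) {θ : ℝ × ℝ × ℝ} {q : ℝ}
    (hq : 1 + θ.1 ^ 2 + θ.2.1 ^ 2 + θ.2.2 ^ 2 ≤ q) :
    q ^ (-δ / 2) ≤ 2 ^ (δ / 2) * prodWeight (-(δ / 3)) (-(δ / 3)) (-(δ / 3)) θ := by
  have hq₀ : 0 ≤ q := by linarith [sq_nonneg θ.1, sq_nonneg θ.2.1, sq_nonneg θ.2.2]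
  have hthird : 0 < δ / 3 := by positivity
  have hx := rpow_le_one_add_abs_rpow hthird (x := θ.1) (q := q)
    (by linarith [sq_nonneg θ.2.1, sq_nonneg θ.2.2])
  have hy := rpow_le_one_add_abs_rpow hthird (x := θ.2.1) (q := q)
    (by linarith [sq_nonneg θ.1, sq_nonneg θ.2.2])
  have hz := rpow_le_one_add_abs_rpow hthird (x := θ.2.2) (q := q)
    (by linarith [sq_nonneg θ.1, sq_nonneg θ.2.1])
  have hcube {t : ℝ} (ht : 0 ≤ t) (s : ℝ) : t ^ (s / 3) * (t ^ (s / 3) * t ^ (s / 3)) = t ^ s := by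
    rw [← pow_two, ← pow_succ', ← Real.rpow_mul_natCast ht]
    norm_num
  calc q ^ (-δ / 2)
    _ = q ^ (-(δ / 3) / 2) * (q ^ (-(δ / 3) / 2) * q ^ (-(δ / 3) / 2)) := by
        rw [← hcube hq₀]
        ring_nf
    _ ≤ _ := mul_le_mul hx (mul_le_mul hy hz (by positivity) (by positivity)) (by positivity)
        (by positivity)
    _ = _ := by
        rw [← hcube zero_le_two (δ / 2), prodWeight, div_right_comm δ 2 3]
        ring

theorem W_nonneg (d : ℕ) (k₁ k₂ k₃ δ : ℝ) (ξ : Sp d) : 0 ≤ W d k₁ k₂ k₃ δ ξ := by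
  unfold W
  positivity

theorem W_le_prodWeight (h₁ : 0 ≤ k₁) (h₂ : 0 ≤ k₂) (h₃ : 0 ≤ k₃) (hδ : 0 < δ) (ξ : Sp d) :
    W d k₁ k₂ k₃ δ ξ ≤ 2 ^ (δ / 2) *
      (prodWeight (k₁ - δ / 3) (k₂ - δ / 3) (k₃ - δ / 3) (ξ.1, ξ.2.1, ξ.2.2.1) *
        (1 + ‖ξ.2.2.2‖) ^ (k₁ + k₂ + k₃)) := by
  have hξ : 0 < 1 + ‖ξ.2.2.2‖ := by positivity
  have hx := sq_add_sq_rpow_le (x := ξ.1) h₁ (norm_nonneg ξ.2.2.2)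
  have hy := sq_add_sq_rpow_le (x := ξ.2.1) h₂ (norm_nonneg ξ.2.2.2)
  have hz := sq_add_sq_rpow_le (x := ξ.2.2.1) h₃ (norm_nonneg ξ.2.2.2)
  have hfull := rpow_le_prodWeight hδ (θ := (ξ.1, ξ.2.1, ξ.2.2.1))
    (le_add_of_nonneg_right (sq_nonneg ‖ξ.2.2.2‖))
  simp only [sub_eq_add_neg, ← prodWeight_mul, Real.rpow_add hξ]
  refine (mul_le_mul (mul_le_mul (mul_le_mul hx hy (by positivity) (by positivity)) hz
    (by positivity) (by positivity)) hfull (by positivity) (by positivity)).trans_eq ?_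
  simp only [prodWeight]
  ring

theorem memLp_two_prodWeight_mul (h₁ : m₁ < -(1 / 2)) (h₂ : m₂ < -(1 / 2)) (h₃ : m₃ < -(1 / 2))
    {r : ℝ} (hr : r < -(d / 2)) :
    MemLp (fun ξ : Sp d =>
      prodWeight m₁ m₂ m₃ (ξ.1, ξ.2.1, ξ.2.2.1) * (1 + ‖ξ.2.2.2‖) ^ r) 2 := by
  rw [memLp_two_iff_integrable_sq (by unfold prodWeight; fun_prop)]
  have hline {m : ℝ} (hm : m < -(1 / 2)) : Integrable fun x : ℝ => ((1 + |x|) ^ m) ^ 2 := by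
    refine (integrable_one_add_abs_rpow (m := m * 2) (by linarith)).congr (.of_forall fun x => ?_)
    exact Real.rpow_mul_natCast (by positivity) m 2
  have hrest : Integrable fun w : EuclideanSpace ℝ (Fin d) => ((1 + ‖w‖) ^ r) ^ 2 := by
    have hdim : (Module.finrank ℝ (EuclideanSpace ℝ (Fin d)) : ℝ) < -(r * 2) := by
      rw [finrank_euclideanSpace_fin]
      linarith
    refine (integrable_one_add_norm hdim).congr (.of_forall fun w => ?_)
    rw [neg_neg]
    exact Real.rpow_mul_natCast (by positivity) r 2
  refine ((hline h₁).mul_prod ((hline h₂).mul_prod ((hline h₃).mul_prod hrest))).congr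
    (.of_forall fun ξ => ?_)
  simp only [prodWeight, mul_pow, mul_assoc]

theorem IsProductConormal.memLp_W_smul_FT {u : Sp d → ℂ} (hu : IsProductConormal d m₁ m₂ m₃ u)
    (h₁ : 0 ≤ k₁) (h₂ : 0 ≤ k₂) (h₃ : 0 ≤ k₃) (hk₁ : k₁ ≤ -m₁ - 1 / 2) (hk₂ : k₂ ≤ -m₂ - 1 / 2)
    (hk₃ : k₃ ≤ -m₃ - 1 / 2) (hδ : 0 < δ) :
    MemLp (fun ξ => W d k₁ k₂ k₃ δ ξ • FT d u ξ) 2 := by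
  obtain ⟨N, hN⟩ := exists_nat_gt (k₁ + k₂ + k₃ + d / 2)
  obtain ⟨C, hC⟩ := hu.decay N
  have hmeas : Measurable (W d k₁ k₂ k₃ δ) := by
    unfold W
    fun_prop
  refine (memLp_two_prodWeight_mul (d := d) (m₁ := k₁ - δ / 3 + m₁) (m₂ := k₂ - δ / 3 + m₂)
    (m₃ := k₃ - δ / 3 + m₃) (by linarith) (by linarith) (by linarith)
    (r := k₁ + k₂ + k₃ + -N) (by linarith)).of_le_mul (c := 2 ^ (δ / 2) * C)
    (hmeas.aestronglyMeasurable.smul (continuous_FT hu.integrable).aestronglyMeasurable)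
    (.of_forall fun ξ => ?_)
  have hweight := prodWeight_nonneg (k₁ - δ / 3 + m₁) (k₂ - δ / 3 + m₂) (k₃ - δ / 3 + m₃)
    (ξ.1, ξ.2.1, ξ.2.2.1)
  rw [norm_smul, Real.norm_of_nonneg (W_nonneg ..), Real.norm_of_nonneg (by positivity)]
  have hW := W_le_prodWeight h₁ h₂ h₃ hδ ξ
  refine (mul_le_mul hW (hC ξ) (norm_nonneg _) ((W_nonneg ..).trans hW)).trans_eq ?_
  rw [← prodWeight_mul, Real.rpow_add (by positivity) (k₁ + k₂ + k₃)]
  ring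

end Weight

/-! ### The triple product -/

section TripleProduct

variable {d : ℕ} {m₁ m₂ m₃ : ℝ} {a₁ a₂ a₃ : ℝ × Par d → ℂ}

theorem Vt_eq_wave_mul (a₁ a₂ a₃ : ℝ × Par d → ℂ) (y : Sp d) :
    Vt d a₁ a₂ a₃ y = wave y.1 (fun η => a₁ (η, (0, 0, y.2.2.2))) *
      wave y.2.1 (fun η => a₂ (η, (0, 0, y.2.2.2))) *
      wave y.2.2.1 (fun η => a₃ (η, (0, 0, y.2.2.2))) := by
  rw [wave_mul_wave_mul_wave]
  simp only [Vt, mul_assoc]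

/-- The parameters `(y₂, y₃, y'')` of the first wave. -/
def par₁ (d : ℕ) : Sp d →L[ℝ] Par d := .snd ℝ ℝ (Par d)

/-- The parameters `(y₁, y₃, y'')` of the second wave. -/
def par₂ (d : ℕ) : Sp d →L[ℝ] Par d :=
  .prod (.fst ℝ ℝ (Par d)) (.comp (.snd ℝ ℝ (ℝ × EuclideanSpace ℝ (Fin d))) (par₁ d))

/-- The parameters `(y₁, y₂, y'')` of the third wave. -/
def par₃ (d : ℕ) : Sp d →L[ℝ] Par d :=
  .prod (.fst ℝ ℝ (Par d)) (.prod (.comp (.fst ℝ ℝ (ℝ × EuclideanSpace ℝ (Fin d))) (par₁ d))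
    (.comp (.snd ℝ ℝ (EuclideanSpace ℝ (Fin d)))
      (.comp (.snd ℝ ℝ (ℝ × EuclideanSpace ℝ (Fin d))) (par₁ d))))

-- With `zⱼ` the `j`-th factor of `V`, write `v₁v₂v₃ - z₁z₂z₃` as
-- `(v₁ - z₁)v₂v₃ + z₁(v₂ - z₂)v₃ + z₁z₂(v₃ - z₃)`. Each `vⱼ - zⱼ` splits into multiples of the two
-- `yₖ` with `k ≠ j`, and the factor `yₖ` lowers the order of the `k`-th wave by one.
theorem exists_isProductConormal_triple_sub (h₁ : m₁ < -1) (h₂ : m₂ < -1) (h₃ : m₃ < -1)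
    (ha₁ : IsSymbolP d m₁ a₁) (ha₂ : IsSymbolP d m₂ a₂) (ha₃ : IsSymbolP d m₃ a₃) {φ : Sp d → ℂ}
    (hφ : ContDiff ℝ (⊤ : ℕ∞) φ) (hφc : HasCompactSupport φ) :
    ∃ u₁ u₂ u₃ : Sp d → ℂ, IsProductConormal d (m₁ - 1) m₂ m₃ u₁ ∧
      IsProductConormal d m₁ (m₂ - 1) m₃ u₂ ∧ IsProductConormal d m₁ m₂ (m₃ - 1) u₃ ∧
      ∀ y, φ y * (v1 d a₁ y * v2 d a₂ y * v3 d a₃ y - Vt d a₁ a₂ a₃ y) =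
        u₁ y + u₂ y + u₃ y := by
  let p₀ : Sp d →L[ℝ] Par d := (axisProj d).comp (par₁ d)
  let z₁ (y : Sp d) : ℂ := wave y.1 fun η => a₁ (η, p₀ y)
  let z₂ (y : Sp d) : ℂ := wave y.2.1 fun η => a₂ (η, p₀ y)
  let z₃ (y : Sp d) : ℂ := wave y.2.2.1 fun η => a₃ (η, p₀ y)
  have hz₁ := ha₁.isConormal_wave (fun y : Sp d => y.1) p₀
  have hz₂ := ha₂.isConormal_wave (fun y : Sp d => y.2.1) p₀
  have hv₂ := ha₂.isConormal_wave (fun y : Sp d => y.2.1) (par₂ d)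
  have hv₃ := ha₃.isConormal_wave (fun y : Sp d => y.2.2.1) (par₃ d)
  have hyz₁ := ha₁.isConormal_mul_wave (fun y : Sp d => y.1) p₀ h₁
  have hyz₂ := ha₂.isConormal_mul_wave (fun y : Sp d => y.2.1) p₀ h₂
  have hyv₂ := ha₂.isConormal_mul_wave (fun y : Sp d => y.2.1) (par₂ d) h₂
  have hyv₃ := ha₃.isConormal_mul_wave (fun y : Sp d => y.2.2.1) (par₃ d) h₃
  obtain ⟨P₁, Q₁, hP₁, hQ₁, hsub₁⟩ := ha₁.exists_isConormal_wave_sub (·.1) (par₁ d) h₁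
  obtain ⟨P₂, Q₂, hP₂, hQ₂, hsub₂⟩ := ha₂.exists_isConormal_wave_sub (·.2.1) (par₂ d) h₂
  obtain ⟨P₃, Q₃, hP₃, hQ₃, hsub₃⟩ := ha₃.exists_isConormal_wave_sub (·.2.2.1) (par₃ d) h₃
  have h₁' : m₁ - 1 < -1 := by linarith
  have h₂' : m₂ - 1 < -1 := by linarith
  have h₃' : m₃ - 1 < -1 := by linarith
  refine ⟨_, _, _,
    (hyz₁.isProductConormal_mul h₁' h₂ h₃ hP₂ hv₃ hφ hφc).add
      (hyz₁.isProductConormal_mul h₁' h₂ h₃ hz₂ hP₃ hφ hφc),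
    (hP₁.isProductConormal_mul h₁ h₂' h₃ hyv₂ hv₃ hφ hφc).add
      (hz₁.isProductConormal_mul h₁ h₂' h₃ hyz₂ hQ₃ hφ hφc),
    (hQ₁.isProductConormal_mul h₁ h₂ h₃' hv₂ hyv₃ hφ hφc).add
      (hz₁.isProductConormal_mul h₁ h₂ h₃' hQ₂ hyv₃ hφ hφc), fun y => ?_⟩
  have hv1 : v1 d a₁ y - z₁ y = y.2.1 * P₁ y + y.2.2.1 * Q₁ y := hsub₁ y
  have hv2 : v2 d a₂ y - z₂ y = y.1 * P₂ y + y.2.2.1 * Q₂ y := hsub₂ y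
  have hv3 : v3 d a₃ y - z₃ y = y.1 * P₃ y + y.2.1 * Q₃ y := hsub₃ y
  rw [show Vt d a₁ a₂ a₃ y = z₁ y * z₂ y * z₃ y from Vt_eq_wave_mul a₁ a₂ a₃ y]
  change _ = φ y * (y.1 * z₁ y * P₂ y * v3 d a₃ y) + φ y * (y.1 * z₁ y * z₂ y * P₃ y) +
    (φ y * (P₁ y * (y.2.1 * v2 d a₂ y) * v3 d a₃ y) + φ y * (z₁ y * (y.2.1 * z₂ y) * Q₃ y)) +
    (φ y * (Q₁ y * v2 d a₂ y * (y.2.2.1 * v3 d a₃ y)) +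
      φ y * (z₁ y * Q₂ y * (y.2.2.1 * v3 d a₃ y)))
  linear_combination φ y * (hv1 * v2 d a₂ y * v3 d a₃ y + z₁ y * hv2 * v3 d a₃ y +
    z₁ y * z₂ y * hv3)

end TripleProduct

theorem stmt_7_general (d : ℕ) {m₁ m₂ m₃ : ℝ} (h₁ : m₁ < -1) (h₂ : m₂ < -1) (h₃ : m₃ < -1)
    {a₁ a₂ a₃ : ℝ × Par d → ℂ} (ha₁ : IsSymbolP d m₁ a₁) (ha₂ : IsSymbolP d m₂ a₂)
    (ha₃ : IsSymbolP d m₃ a₃) {φ : Sp d → ℂ} (hφ : ContDiff ℝ (⊤ : ℕ∞) φ)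
    (hφc : HasCompactSupport φ) :
    ∃ e₁ e₂ e₃ : Sp d → ℂ, Measurable e₁ ∧ Measurable e₂ ∧ Measurable e₃ ∧
      (∀ η, FT d (fun y => φ y *
        (v1 d a₁ y * v2 d a₂ y * v3 d a₃ y - Vt d a₁ a₂ a₃ y)) η = e₁ η + e₂ η + e₃ η) ∧
      ∀ δ : ℝ, 0 < δ →
        MemLp (fun η => W d (-m₁ + 1 / 2) (-m₂ - 1 / 2) (-m₃ - 1 / 2) δ η • e₁ η) 2 volume ∧
        MemLp (fun η => W d (-m₁ - 1 / 2) (-m₂ + 1 / 2) (-m₃ - 1 / 2) δ η • e₂ η) 2 volume ∧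
        MemLp (fun η => W d (-m₁ - 1 / 2) (-m₂ - 1 / 2) (-m₃ + 1 / 2) δ η • e₃ η) 2 volume := by
  obtain ⟨u₁, u₂, u₃, hu₁, hu₂, hu₃, hsub⟩ :=
    exists_isProductConormal_triple_sub h₁ h₂ h₃ ha₁ ha₂ ha₃ hφ hφc
  refine ⟨FT d u₁, FT d u₂, FT d u₃, (continuous_FT hu₁.integrable).measurable,
    (continuous_FT hu₂.integrable).measurable, (continuous_FT hu₃.integrable).measurable,
    fun η => ?_, fun δ hδ => ⟨hu₁.memLp_W_smul_FT ?_ ?_ ?_ ?_ ?_ ?_ hδ,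
      hu₂.memLp_W_smul_FT ?_ ?_ ?_ ?_ ?_ ?_ hδ, hu₃.memLp_W_smul_FT ?_ ?_ ?_ ?_ ?_ ?_ hδ⟩⟩
  · simp only [hsub]
    rw [FT_add (f := fun y => u₁ y + u₂ y) (hu₁.integrable.add hu₂.integrable) hu₃.integrable,
      FT_add hu₁.integrable hu₂.integrable]
  all_goals linarith

/-- **Triple-product statement (5.27) of Proposition 5.21:** the product of
three transversal conormal waves equals the product-type conormal distribution
`V` attached to the codimension-three intersection, modulo errors in `K^{0,m}`
(expressed on the Fourier transform side). -/
theorem stmt_7 (d : ℕ) (m : ℝ) (hm : m < -1)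
    (a₁ a₂ a₃ : ℝ × Par d → ℂ)
    (ha₁ : IsSymbolP d m a₁) (ha₂ : IsSymbolP d m a₂) (ha₃ : IsSymbolP d m a₃)
    (φ : Sp d → ℂ) (hφ : ContDiff ℝ (⊤ : ℕ∞) φ) (hφc : HasCompactSupport φ) :
    ∃ e₁ e₂ e₃ : Sp d → ℂ,
      Measurable e₁ ∧ Measurable e₂ ∧ Measurable e₃ ∧
      (∀ η : Sp d,
        FT d (fun y => φ y * (v1 d a₁ y * v2 d a₂ y * v3 d a₃ y - Vt d a₁ a₂ a₃ y)) η =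
          e₁ η + e₂ η + e₃ η) ∧
      (∀ δ : ℝ, 0 < δ →
        MemLp (fun η => W d (-m + 1/2) (-m - 1/2) (-m - 1/2) δ η • e₁ η) 2 volume ∧
        MemLp (fun η => W d (-m - 1/2) (-m + 1/2) (-m - 1/2) δ η • e₂ η) 2 volume ∧
        MemLp (fun η => W d (-m - 1/2) (-m - 1/2) (-m + 1/2) δ η • e₃ η) 2 volume) := by
  exact stmt_7_general d hm hm hm ha₁ ha₂ ha₃ hφ hφc
end
end
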